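/- arXiv:1805.01637 — 3 statements merged into one kernel-verified Lean document; each statement's English description precedes it below -/
import Mathlib

section
/- In the Section 4 setup, let i be an index with b_i ≠ 0. Then there does not exist an odd integer k such that both β·b_i^(q^k+1) + β^(q^l)·(b_{i+lh}^(q^k+1))^(q^l) = 0 and β·b_i^(q^k)·b_{i+lh} + β^(q^l)·b_{i+lh}^(q^(k+l))·b_i^(q^l) = 0 hold (subscripts modulo 2lh). -/
/-!
Write `m = l h`, so that `z̄ = z ^ p ^ m` is the involution of `F` over its subfield of index two,
and let `u`, `v` be the coefficients of `N'` at `i` and `i + m`. Comparing the two equations that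
are to be refuted gives `u ū = v v̄ ≠ 0`. Adding its conjugate to the isotopism identity
removes the `ω`-component on the right, leaving

  `L'(Z) + conj L'(Z) = 2 (N'(x) conj N'(y) + conj N'(x) N'(y))`,

where `Z` is the argument of `L'`. Comparing the coefficients of `x ^ p ^ s * y ^ p ^ t` for
`s, t ∈ {i, i + m}` (legitimate by `exists_coeff`), only the part
`a (x̄ y + x ȳ) + b (ξ̄ x y + ξ x̄ ȳ)` of `Z` contributes on the left (`coeff_main`): every other
monomial of `Z` has exponents differing by `± d h` modulo `m`, and `0 < d h < m`. The outcome is a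
scalar `μ` with

  `μ (b ξ̄) ^ p ^ i = 4 u v̄`, `μ a ^ p ^ i = 2 (u ū + v v̄)`, `μ (b ξ) ^ p ^ i = 4 ū v`.

Since `u ū = v v̄`, multiplying the outer two equations and squaring the middle one gives
`a ^ 2 = b ^ 2 ξ ξ̄`, so that `a ^ 2 - b ^ 2 ξ ξ̄ = 0` is a square: a contradiction.
-/

/-- The Budaghyan–Helleseth multiplication `x ∗_{(e,β)} y` on `F = GF(q^(2l))`,
relative to a fixed `ω` with `ω + ω^(q^l) = 0`. -/
def bhMul {F : Type*} [Field F] (q l e : ℕ) (β ω x y : F) : F :=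
  x ^ q ^ l * y + x * y ^ q ^ l +
    (β * (x ^ q ^ e * y + x * y ^ q ^ e) +
      β ^ q ^ l * (x ^ q ^ e * y + x * y ^ q ^ e) ^ q ^ l) * ω

/-! ### Coefficients of two-variable linearized polynomials -/

/-- Monomials `x ^ p ^ A * y ^ p ^ B` on a field with `p ^ n` elements have well-defined
coefficients: by Dedekind's independence of characters there are linear functionals `C s t`
on functions of two variables reading off the coefficient of `x ^ p ^ s * y ^ p ^ t`. -/
lemma exists_coeff {F : Type*} [Field F] [Fintype F] (p n : ℕ) (hp : p.Prime)
    (hn : 1 < n) (hcard : Fintype.card F = p ^ n) :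
    ∃ C : ℕ → ℕ → ((F → F → F) →ₗ[F] F), ∀ s t A B c,
      C s t (fun x y => c * (x ^ p ^ A * y ^ p ^ B)) =
        if A ≡ s [MOD n] ∧ B ≡ t [MOD n] then c else 0 := by
  classical
  obtain ⟨g, hg⟩ := LinearMap.exists_leftInverse_of_injective
    (Finsupp.linearCombination F (fun f : F →* F => (f : F → F)))
    (LinearMap.ker_eq_bot.2 (linearIndependent_monoidHom F F))
  have hper : ∀ (j : ℕ) (x : F), x ^ p ^ j = x ^ p ^ (j % n) := by
    intro j x
    conv_lhs => rw [← Nat.mod_add_div j n]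
    rw [pow_add, pow_mul p n, ← hcard, mul_comm, pow_mul, FiniteField.pow_card_pow]
  have hdist : ∀ j s : ℕ, (powMonoidHom (p ^ j) : F →* F) = powMonoidHom (p ^ s) ↔
      j ≡ s [MOD n] := by
    intro j s
    constructor
    · intro h
      obtain ⟨z, hz⟩ := IsCyclic.exists_generator (α := Fˣ)
      have ho : orderOf z = p ^ n - 1 := by
        rw [orderOf_eq_card_of_forall_mem_zpowers hz, Nat.card_eq_fintype_card,
          Fintype.card_units, hcard]
      have h1 : z ^ p ^ (j % n) = z ^ p ^ (s % n) := by
        have := DFunLike.congr_fun h (z : F)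
        simp only [powMonoidHom_apply] at this
        rw [hper j, hper s] at this
        ext
        simpa using this
      have hlt : ∀ k : ℕ, p ^ (k % n) < p ^ n - 1 := by
        intro k
        have h2 : p ^ (k % n) ≤ p ^ (n - 1) :=
          Nat.pow_le_pow_right hp.pos (by have := Nat.mod_lt k (show 0 < n by omega); omega)
        have h3 : p ^ n = p * p ^ (n - 1) := by
          rw [← pow_succ']; congr 1; omega
        have h4 : 2 * p ^ (n - 1) ≤ p * p ^ (n - 1) := Nat.mul_le_mul_right _ hp.two_le
        have h5 : 1 < p ^ (n - 1) := Nat.one_lt_pow (by omega) hp.one_lt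
        omega
      have h6 := pow_injOn_Iio_orderOf (x := z) (by simpa [ho] using hlt j)
        (by simpa [ho] using hlt s) h1
      exact Nat.pow_right_injective hp.two_le h6
    · intro h
      ext x
      simp only [powMonoidHom_apply]
      rw [hper j, hper s, h]
  let ℓ : ℕ → ((F → F) →ₗ[F] F) := fun s => (Finsupp.lapply (powMonoidHom (p ^ s))).comp g
  have hℓ : ∀ s A, ℓ s (fun x => x ^ p ^ A) = if A ≡ s [MOD n] then 1 else 0 := by
    intro s A
    have h1 := LinearMap.congr_fun hg (Finsupp.single (powMonoidHom (p ^ A)) 1)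
    have h2 : g (fun x => x ^ p ^ A) = Finsupp.single (powMonoidHom (p ^ A)) 1 := by
      have h3 : g (powMonoidHom (p ^ A) : F →* F) = Finsupp.single (powMonoidHom (p ^ A)) 1 := by
        simpa [Finsupp.linearCombination_single] using h1
      exact h3
    simp only [ℓ, LinearMap.comp_apply, h2, Finsupp.lapply_apply, Finsupp.single_apply, hdist]
  refine ⟨fun s t =>
    { toFun := fun G => ℓ t (fun y => ℓ s (fun x => G x y))
      map_add' := fun G H => by
        rw [← map_add]; congr 1; ext y; simp only [Pi.add_apply]; rw [← map_add]; rfl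
      map_smul' := fun c G => by
        rw [RingHom.id_apply, ← map_smul]; congr 1; ext y
        simp only [Pi.smul_apply]; rw [← map_smul]; rfl }, ?_⟩
  intro s t A B c
  change ℓ t (fun y => ℓ s (fun x => c * (x ^ p ^ A * y ^ p ^ B))) = _
  have h1 : (fun y : F => ℓ s (fun x => c * (x ^ p ^ A * y ^ p ^ B))) =
      (c * (if A ≡ s [MOD n] then 1 else 0)) • fun y : F => y ^ p ^ B := by
    ext y
    have : (fun x : F => c * (x ^ p ^ A * y ^ p ^ B)) =
        (c * y ^ p ^ B) • fun x : F => x ^ p ^ A := by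
      ext x; simp only [Pi.smul_apply, smul_eq_mul]; ring
    rw [this, map_smul, hℓ]
    simp only [Pi.smul_apply, smul_eq_mul]; ring
  rw [h1, map_smul, hℓ]
  split_ifs <;> simp_all

/-- The coefficient of a product of a linearized polynomial in `x` and one in `y`; the shifts
`r`, `r'` account for conjugating a factor. -/
lemma coeff_mul {F : Type*} [Field F] (p n : ℕ) (hn : 1 < n)
    (C : ℕ → ℕ → ((F → F → F) →ₗ[F] F))
    (hC : ∀ s t A B c, C s t (fun x y => c * (x ^ p ^ A * y ^ p ^ B)) =
        if A ≡ s [MOD n] ∧ B ≡ t [MOD n] then c else 0)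
    (f g : ℕ → F) (hf : ∀ j, f (j + n) = f j) (hg : ∀ j, g (j + n) = g j)
    (r r' s t s' t' : ℕ) (hs : s' + r ≡ s [MOD n]) (ht : t' + r' ≡ t [MOD n]) :
    C s t (fun x y => (∑ j ∈ Finset.range n, f j * x ^ p ^ (j + r)) *
      (∑ k ∈ Finset.range n, g k * y ^ p ^ (k + r'))) = f s' * g t' := by
  have h1 : (fun x y : F => (∑ j ∈ Finset.range n, f j * x ^ p ^ (j + r)) *
      (∑ k ∈ Finset.range n, g k * y ^ p ^ (k + r'))) =
      ∑ j ∈ Finset.range n, ∑ k ∈ Finset.range n,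
        fun x y : F => (f j * g k) * (x ^ p ^ (j + r) * y ^ p ^ (k + r')) := by
    ext x y
    simp only [Finset.sum_apply, Finset.sum_mul_sum]
    refine Finset.sum_congr rfl fun j _ => Finset.sum_congr rfl fun k _ => by ring
  have hper : ∀ f : ℕ → F, (∀ j, f (j + n) = f j) → ∀ j, f (j % n) = f j := by
    intro f hf j
    exact (Function.Periodic.map_mod_nat (f := f) (show Function.Periodic f n from hf) j)
  have key : ∀ r s s' j : ℕ, s' + r ≡ s [MOD n] → j < n → j + r ≡ s [MOD n] → j = s' % n := by
    intro r s s' j h1 h2 h3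
    have h4 : j ≡ s' [MOD n] := Nat.ModEq.add_right_cancel' r (h3.trans h1.symm)
    rw [← h4, Nat.mod_eq_of_lt h2]
  have hmod : ∀ s' r s : ℕ, s' + r ≡ s [MOD n] → s' % n + r ≡ s [MOD n] := fun s' r s h =>
    ((Nat.mod_modEq s' n).add_right r).trans h
  have hpos : 0 < n := by omega
  rw [h1, map_sum]
  simp only [map_sum, hC]
  rw [Finset.sum_eq_single_of_mem (s' % n) (Finset.mem_range.2 (Nat.mod_lt _ hpos)),
    Finset.sum_eq_single_of_mem (t' % n) (Finset.mem_range.2 (Nat.mod_lt _ hpos)),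
    if_pos ⟨hmod _ _ _ hs, hmod _ _ _ ht⟩, hper f hf, hper g hg]
  · intro k hk hne
    exact if_neg fun h => hne (key r' t t' k ht (Finset.mem_range.1 hk) h.2)
  · intro j hj hne
    refine Finset.sum_eq_zero fun k _ => if_neg fun h => ?_
    exact hne (key r s s' j hs (Finset.mem_range.1 hj) h.1)

/-- The power map `p ^ j` shifts both exponents of a monomial by `j`, so it preserves the class
of `A - B` modulo `m`; hence a monomial with `A ≢ B` contributes nothing where `s ≡ t`. -/
lemma coeff_off {F : Type*} [Field F] (p m : ℕ)
    (C : ℕ → ℕ → ((F → F → F) →ₗ[F] F))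
    (hC : ∀ s t A B c, C s t (fun x y => c * (x ^ p ^ A * y ^ p ^ B)) =
        if A ≡ s [MOD 2 * m] ∧ B ≡ t [MOD 2 * m] then c else 0)
    (s t : ℕ) (hst : s ≡ t [MOD m]) (j A B : ℕ) (hAB : ¬ A ≡ B [MOD m]) (c : F) :
    C s t (fun x y => (c * (x ^ p ^ A * y ^ p ^ B)) ^ p ^ j) = 0 := by
  have h1 : (fun x y : F => (c * (x ^ p ^ A * y ^ p ^ B)) ^ p ^ j) =
      fun x y : F => c ^ p ^ j * (x ^ p ^ (A + j) * y ^ p ^ (B + j)) := by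
    ext x y
    rw [mul_pow, mul_pow, ← pow_mul, ← pow_mul, ← pow_add, ← pow_add]
  rw [h1, hC, if_neg]
  rintro ⟨h2, h3⟩
  have h4 : A + j ≡ s [MOD m] := h2.of_mul_left 2
  have h5 : B + j ≡ t [MOD m] := h3.of_mul_left 2
  exact hAB (Nat.ModEq.add_right_cancel' j ((h4.trans hst).trans h5.symm))

/-! ### The twisted product and the coefficient comparison -/

/-- The coefficients of `Z ^ p ^ j`, for `Z` the sum of the form
`a (x̄ y + x ȳ) + b (ξ̄ x y + ξ x̄ ȳ)` and a remainder `R` without terms `x ^ p ^ A * y ^ p ^ B`,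
`A ≡ B` mod `m`: those at `(i, i)`, `(i + m, i)`, `(i + m, i + m)` are proportional to
`b ξ̄`, `a`, `b ξ` (after applying the `p ^ i` power map). -/
lemma coeff_main {F : Type*} [Field F] (p m : ℕ) [ExpChar F p] (hm : 0 < m)
    (hper : ∀ x : F, x ^ p ^ (2 * m) = x)
    (C : ℕ → ℕ → ((F → F → F) →ₗ[F] F))
    (hC : ∀ s t A B c, C s t (fun x y => c * (x ^ p ^ A * y ^ p ^ B)) =
        if A ≡ s [MOD 2 * m] ∧ B ≡ t [MOD 2 * m] then c else 0)
    (a b ξ : F) (ha : a ^ p ^ m = a) (hb : b ^ p ^ m = b) (R : F → F → F)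
    (hR : ∀ s t j, s ≡ t [MOD m] → C s t (fun x y => R x y ^ p ^ j) = 0) (i j : ℕ) :
    ∃ κ : F,
      C i i (fun x y => (a * (x ^ p ^ m * y + x * y ^ p ^ m) +
        b * (ξ ^ p ^ m * (x * y) + ξ * (x ^ p ^ m * y ^ p ^ m)) + R x y) ^ p ^ j) =
          κ * (b * ξ ^ p ^ m) ^ p ^ i ∧
      C (i + m) i (fun x y => (a * (x ^ p ^ m * y + x * y ^ p ^ m) +
        b * (ξ ^ p ^ m * (x * y) + ξ * (x ^ p ^ m * y ^ p ^ m)) + R x y) ^ p ^ j) =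
          κ * a ^ p ^ i ∧
      C (i + m) (i + m) (fun x y => (a * (x ^ p ^ m * y + x * y ^ p ^ m) +
        b * (ξ ^ p ^ m * (x * y) + ξ * (x ^ p ^ m * y ^ p ^ m)) + R x y) ^ p ^ j) =
          κ * (b * ξ) ^ p ^ i := by
  have hmod : ∀ (c : F) (j k : ℕ), j ≡ k [MOD 2 * m] → c ^ p ^ j = c ^ p ^ k := by
    have : ∀ (c : F) (j k : ℕ), c ^ p ^ (j + 2 * m * k) = c ^ p ^ j := by
      intro c j k
      induction k with
      | zero => simp
      | succ k ih => rw [mul_add, ← add_assoc, mul_one, pow_add, pow_mul, hper, ih]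
    intro c j k h
    rw [← Nat.mod_add_div j (2 * m), ← Nat.mod_add_div k (2 * m), this, this, h]
  have hexp : (fun x y : F => (a * (x ^ p ^ m * y + x * y ^ p ^ m) +
        b * (ξ ^ p ^ m * (x * y) + ξ * (x ^ p ^ m * y ^ p ^ m)) + R x y) ^ p ^ j) =
      (fun x y : F => a ^ p ^ j * (x ^ p ^ (m + j) * y ^ p ^ j)) +
      (fun x y : F => a ^ p ^ j * (x ^ p ^ j * y ^ p ^ (m + j))) +
      (fun x y : F => (b * ξ ^ p ^ m) ^ p ^ j * (x ^ p ^ j * y ^ p ^ j)) +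
      (fun x y : F => (b * ξ) ^ p ^ j * (x ^ p ^ (m + j) * y ^ p ^ (m + j))) +
      (fun x y : F => R x y ^ p ^ j) := by
    ext x y
    simp only [Pi.add_apply, add_pow_expChar_pow, mul_pow, ← pow_mul, ← pow_add]
    ring
  have hmm : ∀ s t : ℕ, s + m ≡ t [MOD 2 * m] ↔ s ≡ t + m [MOD 2 * m] := by
    intro s t
    constructor <;> intro h
    · have h1 := h.add_right m
      have h2 : s + m + m ≡ s [MOD 2 * m] := by
        rw [add_assoc, ← two_mul]; exact Nat.add_modEq_right
      exact h2.symm.trans h1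
    · have h1 := h.add_right m
      have h2 : t + m + m ≡ t [MOD 2 * m] := by
        rw [add_assoc, ← two_mul]; exact Nat.add_modEq_right
      exact h1.trans h2
  have hne : ¬ (i ≡ i + m [MOD 2 * m]) := by
    intro h
    have h1 : i + 0 ≡ i + m [MOD 2 * m] := h
    have h2 := Nat.ModEq.add_left_cancel' i h1
    have h3 := (Nat.modEq_zero_iff_dvd.1 h2.symm)
    have := Nat.le_of_dvd hm h3
    omega
  have hcan : m + j ≡ i + m [MOD 2 * m] ↔ j ≡ i [MOD 2 * m] := by
    rw [add_comm m j]
    exact ⟨fun h => Nat.ModEq.add_right_cancel' m h, fun h => h.add_right m⟩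
  have hmj : m + j ≡ i [MOD 2 * m] ↔ j ≡ i + m [MOD 2 * m] := by
    rw [add_comm m j]; exact hmm j i
  have hR1 := hR i i j rfl
  have hR2 := hR (i + m) i j (by simp)
  have hR3 := hR (i + m) (i + m) j rfl
  rw [hexp]
  simp only [map_add, hC, hR1, hR2, hR3, hcan, hmj]
  by_cases h1 : j ≡ i [MOD 2 * m]
  · have h2 : ¬ j ≡ i + m [MOD 2 * m] := fun h => hne (h1.symm.trans h)
    refine ⟨1, ?_⟩
    simp only [h1, h2, and_self, and_false, false_and, if_true, if_false]
    rw [hmod _ j i h1, hmod _ j i h1, hmod _ j i h1]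
    simp
  · by_cases h2 : j ≡ i + m [MOD 2 * m]
    · refine ⟨1, ?_⟩
      simp only [h1, h2, and_self, and_false, false_and, if_true, if_false]
      rw [hmod _ j _ h2, hmod _ j _ h2, hmod _ j _ h2]
      have hx : (ξ ^ p ^ m) ^ p ^ m = ξ := by
        rw [← pow_mul, ← pow_add, ← two_mul, hper]
      have e : ∀ c : F, c ^ p ^ (i + m) = (c ^ p ^ m) ^ p ^ i := by
        intro c; rw [← pow_mul, ← pow_add, add_comm]
      simp only [e, mul_pow b, ha, hb, hx]
      simp
    · refine ⟨0, ?_⟩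
      simp [h1, h2]


/-- Section 4 setup: let i be an index with b_i ≠ 0. Then there does
not exist an odd integer k such that both
β·b_i^(q^k+1) + β^(q^l)·(b_{i+lh}^(q^k+1))^(q^l) = 0 and
β·b_i^(q^k)·b_{i+lh} + β^(q^l)·b_{i+lh}^(q^(k+l))·b_i^(q^l) = 0 hold. -/
theorem bh_no_odd_k (p h l d d' q : ℕ) (hp : p.Prime) (hpodd : Odd p)
    (hh : 0 < h) (hq : q = p ^ h) (hl : 2 < l)
    (hd1 : 1 ≤ d) (hd2 : d ≤ l - 1) (hgd : Nat.gcd l d = 1) (hod : Odd (l + d))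
    (hd'1 : 1 ≤ d') (hd'2 : d' ≤ l - 1) (hgd' : Nat.gcd l d' = 1) (hod' : Odd (l + d'))
    (F : Type*) [Field F] [Fintype F] (hcard : Fintype.card F = q ^ (2 * l))
    (β ω : F) (hβ : ∀ w : F, β ≠ w ^ 2) (hω : ω ≠ 0) (hωtr : ω + ω ^ q ^ l = 0)
    (ξ : F) (hξ0 : ξ ≠ 0) (hξ : ξ ^ (q ^ (l + d) - 1) = β ^ (1 - (q : ℤ) ^ l))
    (a b : F) (ha : a ^ q = a) (hb : b ^ q = b)
    (hns : ∀ w : F, w ^ q = w → a ^ 2 - b ^ 2 * ξ ^ (q ^ l + 1) ≠ w ^ 2)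
    (L' N' : F → F) (hL'b : Function.Bijective L')
    (hL'a : ∀ x y : F, L' (x + y) = L' x + L' y)
    (hN'b : Function.Bijective N') (hN'a : ∀ x y : F, N' (x + y) = N' x + N' y)
    (hiso : ∀ x y : F, L' (a * bhMul q l d β ω x y) +
        L' (b * bhMul q l d β ω (ξ * x ^ q ^ l) y) = bhMul q l d' β ω (N' x) (N' y))
    (bb aa : ℕ → F) (hbbper : ∀ i : ℕ, bb (i + 2 * l * h) = bb i)
    (haaper : ∀ i : ℕ, aa (i + 2 * l * h) = aa i)
    (hN'c : ∀ x : F, N' x = ∑ i ∈ Finset.range (2 * l * h), bb i * x ^ p ^ i)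
    (hL'c : ∀ x : F, L' x = ∑ i ∈ Finset.range (2 * l * h), aa i * x ^ p ^ i)
    (i : ℕ) (hbi : bb i ≠ 0) :
    ¬ ∃ k : ℕ, Odd k ∧
      β * bb i ^ (q ^ k + 1) + β ^ q ^ l * (bb (i + l * h) ^ (q ^ k + 1)) ^ q ^ l = 0 ∧
      β * bb i ^ q ^ k * bb (i + l * h) +
        β ^ q ^ l * bb (i + l * h) ^ q ^ (k + l) * bb i ^ q ^ l = 0 := by
  rintro ⟨k, -, h1, h2⟩
  have : Fact p.Prime := ⟨hp⟩
  have hp3 : 3 ≤ p := by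
    have := hp.two_le
    rcases hpodd with ⟨c, hc⟩
    omega
  obtain ⟨m, hmdef⟩ : ∃ m, m = l * h := ⟨_, rfl⟩
  have hm0 : 0 < m := hmdef ▸ Nat.mul_pos (by omega) hh
  have hn : 2 * l * h = 2 * m := by rw [hmdef]; ring
  have hql : q ^ l = p ^ m := by rw [hq, ← pow_mul, hmdef, mul_comm]
  have hqe : ∀ e, q ^ e = p ^ (e * h) := fun e => by rw [hq, ← pow_mul, mul_comm]
  have hcard' : Fintype.card F = p ^ (2 * m) := by
    rw [hcard, hqe, hn]
  have hchar : CharP F p := by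
    obtain ⟨r, hr⟩ := CharP.exists F
    have hrp : r.Prime := CharP.char_is_prime F r
    have := Fact.mk hrp
    obtain ⟨n', -, hn'⟩ := FiniteField.card F r
    have h3 : r ∣ p ^ (2 * m) := by
      rw [← hcard', hn']
      exact dvd_pow_self r n'.ne_zero
    have h4 := (Nat.prime_dvd_prime_iff_eq hrp hp).1 (hrp.dvd_of_dvd_pow h3)
    exact h4 ▸ hr
  have : ExpChar F p := ExpChar.prime hp
  have htwo : (2 : F) ≠ 0 := by
    intro h0
    have h3 : ((2 : ℕ) : F) = 0 := by exact_mod_cast h0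
    have := Nat.le_of_dvd (by norm_num) ((CharP.cast_eq_zero_iff F p 2).1 h3)
    omega
  have hper : ∀ x : F, x ^ p ^ (2 * m) = x := fun x => by
    rw [← hcard']; exact FiniteField.pow_card x
  have hinv : ∀ x : F, (x ^ p ^ m) ^ p ^ m = x := fun x => by
    rw [← pow_mul, ← pow_add, ← two_mul, hper]
  have hfix : ∀ x : F, x ^ q = x → x ^ p ^ m = x := by
    intro x hx
    rw [← hql]
    clear * - hx
    induction l with
    | zero => simp
    | succ l ih => rw [pow_succ, pow_mul, ih, hx]
  have ha' := hfix a ha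
  have hb' := hfix b hb
  have hβ0 : β ≠ 0 := by
    intro h0; exact hβ 0 (by rw [h0]; ring)
  rw [hn] at hbbper hN'c hL'c
  rw [hql] at hωtr h1 h2
  obtain ⟨u, hu⟩ : ∃ u, u = bb i := ⟨_, rfl⟩
  obtain ⟨v, hv⟩ : ∃ v, v = bb (i + m) := ⟨_, rfl⟩
  rw [← hmdef, ← hu, ← hv] at h1 h2
  rw [← hu] at hbi
  -- the two equations force `u ū = v v̄`
  have hv0 : v ≠ 0 := by
    intro h0
    rw [h0] at h1
    have hz : (0 : F) ^ p ^ m = 0 := zero_pow (pow_pos hp.pos m).ne'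
    rw [zero_pow (Nat.succ_ne_zero _), hz, mul_zero, add_zero] at h1
    exact mul_ne_zero hβ0 (pow_ne_zero _ hbi) h1
  have hnorm : u * u ^ p ^ m = v * v ^ p ^ m := by
    have h3 : v ^ q ^ (k + l) = (v ^ q ^ k) ^ p ^ m := by
      rw [pow_add, pow_mul, hql]
    rw [h3] at h2
    rw [pow_succ, pow_succ, mul_pow] at h1
    have h4 : β * u ^ q ^ k ≠ 0 := mul_ne_zero hβ0 (pow_ne_zero _ hbi)
    apply mul_left_cancel₀ h4
    linear_combination u ^ p ^ m * h1 - v ^ p ^ m * h2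
  obtain ⟨C, hC⟩ := exists_coeff (F := F) p (2 * m) hp (by omega) hcard'
  obtain ⟨D, hD⟩ : ∃ D, D = d * h := ⟨_, rfl⟩
  have hD0 : 0 < D := hD ▸ Nat.mul_pos hd1 hh
  have hDm : D < m := by
    rw [hD, hmdef]; exact Nat.mul_lt_mul_of_pos_right (by omega) hh
  have hDmod : ¬ D ≡ 0 [MOD m] := fun hc => by
    have := Nat.le_of_dvd hD0 ((Nat.modEq_zero_iff_dvd).1 hc)
    omega
  -- the part of the argument of `L'` lying over `ω`
  let R : F → F → F := fun x y =>
    (a * β * ω) * (x ^ p ^ D * y ^ p ^ 0) + (a * β * ω) * (x ^ p ^ 0 * y ^ p ^ D) +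
    (a * β ^ p ^ m * ω) * (x ^ p ^ (D + m) * y ^ p ^ m) +
    (a * β ^ p ^ m * ω) * (x ^ p ^ m * y ^ p ^ (D + m)) +
    (b * β * ξ ^ p ^ D * ω) * (x ^ p ^ (m + D) * y ^ p ^ 0) +
    (b * β * ξ * ω) * (x ^ p ^ m * y ^ p ^ D) +
    (b * β ^ p ^ m * ξ ^ p ^ (D + m) * ω) * (x ^ p ^ D * y ^ p ^ m) +
    (b * β ^ p ^ m * ξ ^ p ^ m * ω) * (x ^ p ^ 0 * y ^ p ^ (D + m))
  have hR : ∀ s t j, s ≡ t [MOD m] → C s t (fun x y => R x y ^ p ^ j) = 0 := by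
    intro s t j hst
    have hoff : ∀ A B : ℕ, ¬ A ≡ B [MOD m] → ∀ c : F,
        C s t (fun x y => (c * (x ^ p ^ A * y ^ p ^ B)) ^ p ^ j) = 0 :=
      fun A B hAB c => coeff_off p m C hC s t hst j A B hAB c
    have hadd : ∀ f g : F → F → F, C s t (fun x y => f x y ^ p ^ j) = 0 →
        C s t (fun x y => g x y ^ p ^ j) = 0 →
        C s t (fun x y => (f x y + g x y) ^ p ^ j) = 0 := by
      intro f g hf hg
      have h3 : (fun x y => (f x y + g x y) ^ p ^ j) =
          (fun x y => f x y ^ p ^ j) + fun x y => g x y ^ p ^ j := by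
        ext x y; simp only [Pi.add_apply, add_pow_expChar_pow]
      rw [h3, map_add, hf, hg, add_zero]
    have hmm : m % m = 0 := Nat.mod_self m
    have hDD : D % m = D := Nat.mod_eq_of_lt hDm
    simp only [R]
    repeat' apply hadd
    all_goals
      apply hoff
      simp only [Nat.ModEq, Nat.add_mod_right, Nat.add_mod_left, hmm, hDD, Nat.zero_mod]
      omega
  have hZ : ∀ x y : F, a * bhMul q l d β ω x y + b * bhMul q l d β ω (ξ * x ^ q ^ l) y =
      a * (x ^ p ^ m * y + x * y ^ p ^ m) +
        b * (ξ ^ p ^ m * (x * y) + ξ * (x ^ p ^ m * y ^ p ^ m)) + R x y := by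
    intro x y
    have e1 : ∀ z : F, (z ^ p ^ D) ^ p ^ m = z ^ p ^ (D + m) := fun z => by
      rw [← pow_mul, ← pow_add]
    have e2 : ∀ z : F, (z ^ p ^ m) ^ p ^ D = z ^ p ^ (m + D) := fun z => by
      rw [← pow_mul, ← pow_add]
    have e3 : ∀ z : F, (z ^ p ^ (m + D)) ^ p ^ m = z ^ p ^ D := fun z => by
      rw [← pow_mul, ← pow_add, show m + D + m = 2 * m + D by ring, pow_add, pow_mul, hper]
    simp only [bhMul, hql, hqe d, ← hD, add_pow_expChar_pow, mul_pow, hinv, e1, e2, e3, R,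
      pow_zero, pow_one]
    ring
  -- adding the conjugate kills the `ω`-component on the right
  have hid : ∀ x y : F, (∑ j ∈ Finset.range (2 * m), aa j *
        (a * bhMul q l d β ω x y + b * bhMul q l d β ω (ξ * x ^ q ^ l) y) ^ p ^ j) +
      (∑ j ∈ Finset.range (2 * m), aa j ^ p ^ m *
        (a * bhMul q l d β ω x y + b * bhMul q l d β ω (ξ * x ^ q ^ l) y) ^ p ^ (j + m)) =
      2 * (N' x * (N' y) ^ p ^ m + (N' x) ^ p ^ m * N' y) := by
    intro x y
    have h3 := hiso x y
    rw [← hL'a, hL'c] at h3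
    have h4 := congrArg (fun z : F => z ^ p ^ m) h3
    simp only [sum_pow_char_pow p, mul_pow, ← pow_mul, ← pow_add] at h4
    rw [h3, h4]
    have hω' : ω ^ p ^ m = -ω := by linear_combination hωtr
    simp only [bhMul, hql, add_pow_expChar_pow, mul_pow, hinv, hω']
    ring
  have hN'bar : ∀ x : F, (N' x) ^ p ^ m =
      ∑ j ∈ Finset.range (2 * m), bb j ^ p ^ m * x ^ p ^ (j + m) := by
    intro x
    rw [hN'c]
    simp only [sum_pow_char_pow p, mul_pow, ← pow_mul, ← pow_add]
  have hbbper' : ∀ j, bb (j + 2 * m) ^ p ^ m = bb j ^ p ^ m := fun j => by rw [hbbper]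
  have hfun : (∑ j ∈ Finset.range (2 * m), aa j • fun x y : F =>
        (a * (x ^ p ^ m * y + x * y ^ p ^ m) +
        b * (ξ ^ p ^ m * (x * y) + ξ * (x ^ p ^ m * y ^ p ^ m)) + R x y) ^ p ^ j) +
      (∑ j ∈ Finset.range (2 * m), aa j ^ p ^ m • fun x y : F =>
        (a * (x ^ p ^ m * y + x * y ^ p ^ m) +
        b * (ξ ^ p ^ m * (x * y) + ξ * (x ^ p ^ m * y ^ p ^ m)) + R x y) ^ p ^ (j + m)) =
      (2 : F) • ((fun x y : F => (∑ j ∈ Finset.range (2 * m), bb j * x ^ p ^ (j + 0)) *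
          (∑ k ∈ Finset.range (2 * m), bb k ^ p ^ m * y ^ p ^ (k + m))) +
        fun x y : F => (∑ j ∈ Finset.range (2 * m), bb j ^ p ^ m * x ^ p ^ (j + m)) *
          (∑ k ∈ Finset.range (2 * m), bb k * y ^ p ^ (k + 0))) := by
    ext x y
    have h3 := hid x y
    rw [hZ, hN'bar, hN'bar, hN'c, hN'c] at h3
    simpa only [Pi.add_apply, Finset.sum_apply, Pi.smul_apply, smul_eq_mul, add_zero] using h3
  choose κ hκ1 hκ2 hκ3 using
    coeff_main p m hm0 hper C hC a b ξ ha' hb' R hR i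
  let μ : F := (∑ j ∈ Finset.range (2 * m), aa j * κ j) +
    ∑ j ∈ Finset.range (2 * m), aa j ^ p ^ m * κ (j + m)
  have h2m : ∀ j : ℕ, j + m + m ≡ j [MOD 2 * m] := fun j => by
    rw [add_assoc, ← two_mul]; exact Nat.add_modEq_right
  have hbb2 : bb (i + m + m) = u := by rw [add_assoc, ← two_mul, hbbper, hu]
  have c1 := congrArg (C i i) hfun
  have c2 := congrArg (C (i + m) i) hfun
  have c3 := congrArg (C (i + m) (i + m)) hfun
  simp only [map_add, map_sum, map_smul, smul_eq_mul, hκ1] at c1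
  simp only [map_add, map_sum, map_smul, smul_eq_mul, hκ2] at c2
  simp only [map_add, map_sum, map_smul, smul_eq_mul, hκ3] at c3
  have cm := fun f g hf hg => coeff_mul (F := F) p (2 * m) (by omega) C hC f g hf hg
  rw [cm _ _ hbbper hbbper' 0 m i i i (i + m) rfl (h2m i),
    cm _ _ hbbper' hbbper m 0 i i (i + m) i (h2m i) rfl] at c1
  rw [cm _ _ hbbper hbbper' 0 m (i + m) i (i + m) (i + m) rfl (h2m i),
    cm _ _ hbbper' hbbper m 0 (i + m) i i i rfl rfl] at c2
  rw [cm _ _ hbbper hbbper' 0 m (i + m) (i + m) (i + m) i rfl rfl,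
    cm _ _ hbbper' hbbper m 0 (i + m) (i + m) i (i + m) rfl rfl] at c3
  simp only [← mul_assoc, ← Finset.sum_mul, ← add_mul, ← hu, ← hv] at c1 c2 c3
  have e1 : μ * (b * ξ ^ p ^ m) ^ p ^ i = 4 * (u * v ^ p ^ m) := by
    simp only [μ]; linear_combination c1
  have e2 : μ * a ^ p ^ i = 4 * (u * u ^ p ^ m) := by
    simp only [μ]; linear_combination c2 - 2 * hnorm
  have e3 : μ * (b * ξ) ^ p ^ i = 4 * (u ^ p ^ m * v) := by
    simp only [μ]; linear_combination c3
  have hμ : μ ≠ 0 := by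
    intro h0
    rw [h0, zero_mul] at e1
    have h4 : (4 : F) ≠ 0 := by
      rw [show (4 : F) = 2 * 2 by norm_num]; exact mul_ne_zero htwo htwo
    exact mul_ne_zero h4 (mul_ne_zero hbi (pow_ne_zero _ hv0)) e1.symm
  have hpow : (a ^ 2) ^ p ^ i = (b ^ 2 * ξ ^ (p ^ m + 1)) ^ p ^ i := by
    have hsplit : (b ^ 2 * ξ ^ (p ^ m + 1)) ^ p ^ i =
        (b * ξ ^ p ^ m) ^ p ^ i * (b * ξ) ^ p ^ i := by
      rw [← mul_pow]; congr 1; ring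
    rw [hsplit, pow_right_comm]
    apply mul_left_cancel₀ (pow_ne_zero 2 hμ)
    linear_combination (μ * a ^ p ^ i + 4 * (u * u ^ p ^ m)) * e2 -
      μ * (b * ξ) ^ p ^ i * e1 - 4 * (u * v ^ p ^ m) * e3 + 16 * (u * u ^ p ^ m) * hnorm
  have hsq : a ^ 2 = b ^ 2 * ξ ^ (p ^ m + 1) := by
    have := iterateFrobenius_inj F p i
    exact this (by simpa only [iterateFrobenius_def] using hpow)
  refine hns 0 (zero_pow ?_) ?_
  · rw [hq]; exact (pow_pos hp.pos h).ne'
  · rw [hql, hsq]; ring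
end

section
/- In the Section 4 setup, one has d' = d or d' = l − d. -/
namespace BH

/-! ### Coefficients of functions of two variables -/

variable {F ι : Type*} [Field F]

/-- The monomial `φ_s(x) φ_t(y)` in two variables, as a character of the monoid `F × F`. -/
def monomialHom (φ : ι → F →+* F) (s : ι × ι) : F × F →* F where
  toFun p := φ s.1 p.1 * φ s.2 p.2
  map_one' := by simp
  map_mul' p r := by simp [mul_mul_mul_comm]

theorem linearIndependent_monomialHom (φ : ι → F →+* F) (hinj : Function.Injective φ) :
    LinearIndependent F (fun s : ι × ι => (monomialHom φ s : F × F → F)) := by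
  have h : Function.Injective (monomialHom φ) := by
    rintro ⟨s, t⟩ ⟨s', t'⟩ h
    have h1 : φ s = φ s' := by
      ext x
      simpa [monomialHom] using DFunLike.congr_fun h (x, 1)
    have h2 : φ t = φ t' := by
      ext x
      simpa [monomialHom] using DFunLike.congr_fun h (1, x)
    rw [hinj h1, hinj h2]
  exact (linearIndependent_monoidHom (F × F) F).comp _ h

variable [Fintype ι]

/-- Composing a linearized polynomial with `φ_e` on the left twists and shifts its coefficients. -/
theorem comp_linearized [AddCommGroup ι] {φ : ι → F →+* F}
    (hadd : ∀ i j x, φ (i + j) x = φ i (φ j x)) (e : ι) (u : ι → F) (x : F) :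
    φ e (∑ k, u k * φ k x) = ∑ k, φ e (u (k - e)) * φ k x := by
  rw [map_sum, ← Fintype.sum_equiv (Equiv.addLeft e) _ (fun k => φ e (u (k - e)) * φ k x)
    fun _ => rfl]
  refine Finset.sum_congr rfl fun k _ => ?_
  simp [hadd]

variable [DecidableEq ι]

/-- Coefficient extraction: since the monomials are linearly independent functions, the
coefficient of `φ_i(x) φ_j(y)` is a linear functional of the function. -/
theorem exists_coeff (φ : ι → F →+* F) (hinj : Function.Injective φ) :
    ∃ E : ι → ι → ((F × F → F) →ₗ[F] F), ∀ i j s t,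
      E i j (fun p => φ s p.1 * φ t p.2) = if s = i ∧ t = j then 1 else 0 := by
  obtain ⟨g, hg⟩ := (Fintype.linearCombination F
    (fun s : ι × ι => (monomialHom φ s : F × F → F))).exists_leftInverse_of_injective
      (LinearMap.ker_eq_bot.2 (linearIndependent_iff_injective_fintypeLinearCombination.1
        (linearIndependent_monomialHom φ hinj)))
  refine ⟨fun i j => (LinearMap.proj (i, j)).comp g, fun i j s t => ?_⟩
  have h := LinearMap.congr_fun hg (Pi.single (s, t) 1)
  simp only [LinearMap.comp_apply, LinearMap.id_apply,
    Fintype.linearCombination_apply_single, one_smul] at h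
  have h' := congrFun h (i, j)
  have e : (monomialHom φ (s, t) : F × F → F) = fun p => φ s p.1 * φ t p.2 := rfl
  rw [e] at h'
  simp only [LinearMap.comp_apply, LinearMap.proj_apply]
  rw [h', Pi.single_apply]
  simp [Prod.ext_iff, eq_comm]

/-- The coefficients of a product of two linearized polynomials in separate variables. -/
theorem coeff_mul {φ : ι → F →+* F} {E : ι → ι → ((F × F → F) →ₗ[F] F)}
    (hE : ∀ i j s t, E i j (fun p => φ s p.1 * φ t p.2) = if s = i ∧ t = j then 1 else 0)
    (u v : ι → F) (i j : ι) :
    E i j (fun p => (∑ k, u k * φ k p.1) * ∑ k, v k * φ k p.2) = u i * v j := by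
  have : (fun p : F × F => (∑ k, u k * φ k p.1) * ∑ k, v k * φ k p.2) =
      ∑ s, ∑ t, (u s * v t) • fun p : F × F => φ s p.1 * φ t p.2 := by
    ext p
    simp only [Finset.sum_mul_sum, Finset.sum_apply, Pi.smul_apply, smul_eq_mul]
    exact Finset.sum_congr rfl fun _ _ => Finset.sum_congr rfl fun _ _ => by ring
  rw [this]
  simp only [map_sum, map_smul, hE, smul_eq_mul]
  rw [Finset.sum_eq_single i, Finset.sum_eq_single j] <;> simp +contextual

variable [AddCommGroup ι]

/-- Applying a linearized polynomial to a monomial only shifts both exponents simultaneously,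
so the difference of the two exponents is preserved. -/
theorem coeff_comp {φ : ι → F →+* F} {E : ι → ι → ((F × F → F) →ₗ[F] F)}
    (hE : ∀ i j s t, E i j (fun p => φ s p.1 * φ t p.2) = if s = i ∧ t = j then 1 else 0)
    (hadd : ∀ i j x, φ (i + j) x = φ i (φ j x))
    (c : ι → F) (g : F) (s t i j : ι) :
    E i j (fun p => ∑ k, c k * φ k (g * (φ s p.1 * φ t p.2))) =
      if j - i = t - s then c (i - s) * φ (i - s) g else 0 := by
  have : (fun p : F × F => ∑ k, c k * φ k (g * (φ s p.1 * φ t p.2))) =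
      ∑ k, (c k * φ k g) • fun p : F × F => φ (k + s) p.1 * φ (k + t) p.2 := by
    ext p
    simp only [Finset.sum_apply, Pi.smul_apply, smul_eq_mul, map_mul, hadd]
    exact Finset.sum_congr rfl fun _ _ => by ring
  rw [this]
  simp only [map_sum, map_smul, hE, smul_eq_mul]
  rw [Finset.sum_eq_single (i - s)]
  · have : (i - s + s = i ∧ i - s + t = j) ↔ j - i = t - s := by
      constructor
      · rintro ⟨-, rfl⟩; abel
      · intro h
        refine ⟨by abel, ?_⟩
        rw [sub_eq_iff_eq_add] at h
        rw [h]; abel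
    rw [if_congr this rfl rfl, mul_ite, mul_one, mul_zero]
  · intro k _ hk
    rw [if_neg, mul_zero]
    rintro ⟨rfl, -⟩
    exact hk (by abel)
  · simp

/-! ### The coefficient comparison -/

/-- The homogeneous linear system `y u + x v = 0`, `x' u + y' v = 0` has determinant
`y y' - x x'`; when this is nonzero, only the zero solution exists. -/
theorem system_zero {x y x' y' u v : F} (hne : x * x' ≠ y * y')
    (h1 : x * v + y * u = 0) (h2 : x' * u + y' * v = 0) : u = 0 ∧ v = 0 := by
  have hne' : x * x' - y * y' ≠ 0 := sub_ne_zero.2 hne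
  constructor
  · refine (mul_eq_zero.1 (?_ : (x * x' - y * y') * u = 0)).resolve_left hne'
    linear_combination x * h2 - y' * h1
  · refine (mul_eq_zero.1 (?_ : (x * x' - y * y') * v = 0)).resolve_left hne'
    linear_combination x' * h1 - y * h2

/-- The heart of the matter, with the Frobenius powers abstracted to an additive group `ι` acting
on `F` by pairwise distinct endomorphisms `φ`; `T` is the involution, `δ` and `δ'` are the
exponents of the two multiplications. If `δ` and `δ'` are not `0` up to `T`, and `δ'` is not `±δ`
up to `T`, there is no such `N`. -/
theorem no_isotopism (φ : ι → F →+* F) (hinj : Function.Injective φ)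
    (hadd : ∀ i j x, φ (i + j) x = φ i (φ j x))
    (T δ δ' : ι) (hTT : T + T = 0)
    (hδ0 : δ ≠ 0) (hδT : δ ≠ T) (h0 : δ' ≠ 0) (h0T : δ' ≠ T)
    (h1 : δ' ≠ δ) (h1T : δ' ≠ δ + T) (h2 : δ' ≠ -δ) (h2T : δ' ≠ -δ + T)
    (two : (2 : F) ≠ 0) (β ω ξ a b : F) (hβ : β ≠ 0) (hω0 : ω ≠ 0) (hω : φ T ω = -ω)
    (ha : φ T a = a) (hb : φ T b = b) (hab : a ^ 2 ≠ b ^ 2 * (ξ * φ T ξ))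
    (L N : F → F) (lam n : ι → F) (hL : ∀ x, L x = ∑ k, lam k * φ k x)
    (hN : ∀ x, N x = ∑ k, n k * φ k x) (hN0 : ∃ x, N x ≠ 0)
    (M : ι → F → F → F)
    (hM : ∀ e x y, M e x y = φ T x * y + x * φ T y +
      (β * (φ e x * y + x * φ e y) + φ T β * φ T (φ e x * y + x * φ e y)) * ω)
    (hiso : ∀ x y, L (a * M δ x y) + L (b * M δ (ξ * φ T x) y) = M δ' (N x) (N y)) :
    False := by
  obtain ⟨E, hE⟩ := exists_coeff φ hinj
  have h00 : ∀ x, φ 0 x = x := fun x => (φ 0).injective (by rw [← hadd, add_zero])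
  have hinv : ∀ x, φ T (φ T x) = x := fun x => by rw [← hadd, hTT, h00]
  have hcomm : ∀ i j x, φ i (φ j x) = φ j (φ i x) := fun i j x => by
    rw [← hadd, ← hadd, add_comm]
  have hneg : -T = T := neg_eq_of_add_eq_zero_left hTT
  have hsub : ∀ i, i - T = i + T := fun i => by rw [sub_eq_add_neg, hneg]
  have hadT : ∀ i, i + T + T = i := fun i => by rw [add_assoc, hTT, add_zero]
  -- The left-hand side is `L` applied to a sum of twelve monomials.
  set Z : F → F → F := fun x y =>
    a * (φ T x * φ 0 y) + a * (φ 0 x * φ T y) + (b * φ T ξ) * (φ 0 x * φ 0 y)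
      + (b * ξ) * (φ T x * φ T y)
      + (a * β * ω) * (φ δ x * φ 0 y) + (a * β * ω) * (φ 0 x * φ δ y)
      + (a * φ T β * ω) * (φ (δ + T) x * φ T y) + (a * φ T β * ω) * (φ T x * φ (δ + T) y)
      + (b * β * ω * φ δ ξ) * (φ (δ + T) x * φ 0 y) + (b * β * ω * ξ) * (φ T x * φ δ y)
      + (b * φ T β * ω * φ (δ + T) ξ) * (φ δ x * φ T y)
      + (b * φ T β * ω * φ T ξ) * (φ 0 x * φ (δ + T) y) with hZ
  have hLZ : ∀ x y, L (Z x y) = M δ' (N x) (N y) := by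
    intro x y
    rw [← hiso]
    have hLadd : ∀ u v, L (u + v) = L u + L v := fun u v => by
      simp only [hL, map_add, mul_add, Finset.sum_add_distrib]
    rw [← hLadd]
    congr 1
    simp only [hZ, hM, h00, map_add, map_mul, hinv, hadd]
    simp only [hcomm δ T, hinv]
    ring
  -- Coefficients of linearized polynomials in `Z`.
  have hcZ : ∀ (c : ι → F) (i j : ι), E i j (fun p => ∑ k, c k * φ k (Z p.1 p.2)) =
      (if j - i = 0 - T then c (i - T) * φ (i - T) a else 0)
      + (if j - i = T - 0 then c (i - 0) * φ (i - 0) a else 0)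
      + (if j - i = 0 - 0 then c (i - 0) * φ (i - 0) (b * φ T ξ) else 0)
      + (if j - i = T - T then c (i - T) * φ (i - T) (b * ξ) else 0)
      + (if j - i = 0 - δ then c (i - δ) * φ (i - δ) (a * β * ω) else 0)
      + (if j - i = δ - 0 then c (i - 0) * φ (i - 0) (a * β * ω) else 0)
      + (if j - i = T - (δ + T) then c (i - (δ + T)) * φ (i - (δ + T)) (a * φ T β * ω) else 0)
      + (if j - i = δ + T - T then c (i - T) * φ (i - T) (a * φ T β * ω) else 0)
      + (if j - i = 0 - (δ + T) then c (i - (δ + T)) * φ (i - (δ + T)) (b * β * ω * φ δ ξ) else 0)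
      + (if j - i = δ - T then c (i - T) * φ (i - T) (b * β * ω * ξ) else 0)
      + (if j - i = T - δ then c (i - δ) * φ (i - δ) (b * φ T β * ω * φ (δ + T) ξ) else 0)
      + (if j - i = δ + T - 0 then c (i - 0) * φ (i - 0) (b * φ T β * ω * φ T ξ) else 0) := by
    intro c i j
    simp only [← coeff_comp hE hadd]
    simp only [← map_add]
    congr 1
    ext p
    simp only [Pi.add_apply, ← Finset.sum_add_distrib]
    refine Finset.sum_congr rfl fun k _ => ?_
    simp only [hZ, map_add]
    ring
  have hcZ0 : ∀ (c : ι → F) (i j : ι), j - i ≠ 0 → j - i ≠ T → j - i ≠ δ → j - i ≠ δ + T →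
      j - i ≠ -δ → j - i ≠ -δ + T → E i j (fun p => ∑ k, c k * φ k (Z p.1 p.2)) = 0 := by
    intro c i j g1 g2 g3 g4 g5 g6
    have e1 : T - (δ + T) = -δ := by abel
    have e2 : -(δ + T) = -δ + T := by rw [neg_add, hneg]
    have e3 : T - δ = -δ + T := by abel
    simp only [hcZ, zero_sub, sub_zero, sub_self, e1, e2, e3, hsub, zero_add, hadT]
    simp only [g1, g2, g3, g4, g5, g6, if_false, add_zero]
  have hnegδ0 : -δ ≠ 0 := neg_ne_zero.2 hδ0
  have hnegδT : -δ ≠ T := fun h => hδT (by rw [← hneg, ← h, neg_neg])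
  have hδT0 : δ + T ≠ 0 := fun h => hδT (by rw [← hneg]; exact eq_neg_of_add_eq_zero_left h)
  have hnδT0 : -δ + T ≠ 0 := fun h => hnegδT (by rw [← hneg]; exact eq_neg_of_add_eq_zero_left h)
  by_cases hT0 : T = 0
  · subst hT0
    rw [h00] at hω
    exact hω0 ((mul_eq_zero.1 (by linear_combination hω : 2 * ω = 0)).resolve_left two)
  have hcZd : ∀ (c : ι → F) (i : ι), E i i (fun p => ∑ k, c k * φ k (Z p.1 p.2)) =
      (c i + c (i + T)) * φ i (b * φ T ξ) := by
    intro c i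
    have e1 : T - (δ + T) = -δ := by abel
    have e2 : -(δ + T) = -δ + T := by rw [neg_add, hneg]
    have e3 : T - δ = -δ + T := by abel
    rw [hcZ]
    simp only [zero_sub, sub_zero, sub_self, e1, e2, e3, hsub, zero_add, hadT]
    simp only [Ne.symm hT0, hδ0.symm, hnegδ0.symm, hδT0.symm, hnδT0.symm, if_false, if_true,
      hadd, map_mul, hb]
    ring
  have hcZT : ∀ (c : ι → F) (i : ι), E i (i + T) (fun p => ∑ k, c k * φ k (Z p.1 p.2)) =
      (c i + c (i + T)) * φ i a := by
    intro c i
    have e1 : T - (δ + T) = -δ := by abel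
    have e2 : -(δ + T) = -δ + T := by rw [neg_add, hneg]
    have e3 : T - δ = -δ + T := by abel
    have e4 : i + T - i = T := by abel
    have f1 : ¬ T = δ + T := fun h => hδ0 (by simpa using h.symm)
    have f2 : ¬ T = -δ + T := fun h => hδ0 (by simpa using h.symm)
    rw [hcZ]
    simp only [zero_sub, sub_zero, sub_self, e1, e2, e3, e4, hsub, zero_add, hadT]
    simp only [hT0, hδT.symm, hnegδT.symm, f1, f2, if_false, if_true, hadd, ha]
    ring
  -- `m` lists the coefficients of `x ↦ φ_T (N x)`; adding and subtracting the `φ_T`-conjugate of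
  -- the isotopism identity gives one identity for each of the two components of the product.
  set m : ι → F := fun k => φ T (n (k - T)) with hm
  have hmT : ∀ k, m (k + T) = φ T (n k) := fun k => by simp [hm]
  have hnT : ∀ k, n (k + T) = φ T (m k) := fun k => by simp [hm, hinv, hsub]
  have hNbar : ∀ x, φ T (N x) = ∑ k, m k * φ k x := fun x => by
    rw [hN, comp_linearized hadd]
  have hLbar : ∀ x, φ T (L x) = ∑ k, φ T (lam (k - T)) * φ k x := fun x => by
    rw [hL, comp_linearized hadd]
  set mu : ι → F := fun k => lam k + φ T (lam (k - T))
  set nu : ι → F := fun k => lam k - φ T (lam (k - T))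
  have eq1 : ∀ x y, 2 * (N x * φ T (N y) + φ T (N x) * N y) = ∑ k, mu k * φ k (Z x y) := by
    intro x y
    have h : ∑ k, mu k * φ k (Z x y) = L (Z x y) + φ T (L (Z x y)) := by
      rw [hLbar, hL, ← Finset.sum_add_distrib]
      exact Finset.sum_congr rfl fun k _ => by ring
    rw [h, hLZ, hM]
    simp only [map_add, map_mul, hinv, hω]
    ring
  have eq2 : ∀ x y, 2 * ω * (β * (φ δ' (N x) * N y + N x * φ δ' (N y)) +
      φ T β * (φ δ' (φ T (N x)) * φ T (N y) + φ T (N x) * φ δ' (φ T (N y)))) =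
      ∑ k, nu k * φ k (Z x y) := by
    intro x y
    have h : ∑ k, nu k * φ k (Z x y) = L (Z x y) - φ T (L (Z x y)) := by
      rw [hLbar, hL, ← Finset.sum_sub_distrib]
      exact Finset.sum_congr rfl fun k _ => by ring
    rw [h, hLZ, hM]
    simp only [map_add, map_mul, hinv, hω, hcomm T δ']
    ring
  have ceq1 : ∀ i j, 2 * (n i * m j + m i * n j) =
      E i j (fun p => ∑ k, mu k * φ k (Z p.1 p.2)) := by
    intro i j
    have h : (fun p : F × F => ∑ k, mu k * φ k (Z p.1 p.2)) = (2 : F) •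
        ((fun p : F × F => (∑ k, n k * φ k p.1) * ∑ k, m k * φ k p.2) +
          (fun p : F × F => (∑ k, m k * φ k p.1) * ∑ k, n k * φ k p.2)) := by
      ext p
      rw [← eq1, hNbar, hNbar, hN, hN]
      rfl
    rw [h, map_smul, map_add, coeff_mul hE, coeff_mul hE, smul_eq_mul]
  set c : ι → F := fun k => φ δ' (n (k - δ')) with hc
  set c' : ι → F := fun k => φ δ' (m (k - δ')) with hc'
  have ceq2 : ∀ i j, 2 * ω * (β * (c i * n j + n i * c j) + φ T β * (c' i * m j + m i * c' j)) =
      E i j (fun p => ∑ k, nu k * φ k (Z p.1 p.2)) := by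
    intro i j
    have h : (fun p : F × F => ∑ k, nu k * φ k (Z p.1 p.2)) = (2 * ω) •
        (β • ((fun p : F × F => (∑ k, c k * φ k p.1) * ∑ k, n k * φ k p.2) +
            (fun p : F × F => (∑ k, n k * φ k p.1) * ∑ k, c k * φ k p.2)) +
          φ T β • ((fun p : F × F => (∑ k, c' k * φ k p.1) * ∑ k, m k * φ k p.2) +
            (fun p : F × F => (∑ k, m k * φ k p.1) * ∑ k, c' k * φ k p.2))) := by
      ext p
      rw [← eq2]
      simp only [hN, comp_linearized hadd]
      rfl
    rw [h]
    simp only [map_smul, map_add, coeff_mul hE, smul_eq_mul]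
  -- If `n_i`, `m_i` had equal norms, the coefficients at `(i, i)` and `(i, i + T)`, which on the
  -- other side are multiples of `φ_i (b ξ̄)` and `φ_i a` by the same factor, would give
  -- `a² = b² ξ ξ̄`.
  have claimA : ∀ i, (n i ≠ 0 ∨ m i ≠ 0) → n i * φ T (n i) ≠ m i * φ T (m i) := by
    intro i hi heq
    have g1 := ceq1 i i
    have g2 := ceq1 i (i + T)
    rw [hcZd] at g1
    rw [hcZT, hmT, hnT] at g2
    set κ := mu i + mu (i + T)
    have ha' : φ T (φ i a) = φ i a := by rw [hcomm, ha]
    have hb' : φ T (φ i b) = φ i b := by rw [hcomm, hb]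
    have g1' := congrArg (φ T) g1
    have g2' := congrArg (φ T) g2
    rw [map_mul] at g1
    simp only [map_mul, map_add, hinv, ha', hb', map_ofNat, hcomm T i] at g1' g2'
    have hn : n i ≠ 0 := by
      rintro h
      rw [h] at heq hi
      simp at heq hi
      exact hi heq
    have hn' : φ T (n i) ≠ 0 := fun h => hn ((map_eq_zero _).1 h)
    have h4 : 2 * (2 * (n i * φ T (n i))) ≠ 0 :=
      mul_ne_zero two (mul_ne_zero two (mul_ne_zero hn hn'))
    have g3 : 2 * (2 * (n i * φ T (n i))) = κ * φ i a := by linear_combination g2 + 2 * heq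
    have g3' : 2 * (2 * (n i * φ T (n i))) = φ T κ * φ i a := by
      linear_combination g2' + 2 * heq
    have hκ : κ ≠ 0 := by rintro h; rw [h, zero_mul] at g3; exact h4 g3
    have hκ' : φ T κ ≠ 0 := fun h => hκ ((map_eq_zero _).1 h)
    apply hab
    apply (φ i).injective
    apply mul_left_cancel₀ (mul_ne_zero hκ hκ')
    simp only [map_mul, map_pow]
    calc κ * φ T κ * φ i a ^ 2 = (κ * φ i a) * (φ T κ * φ i a) := by ring
      _ = (2 * (2 * (n i * φ T (n i)))) * (2 * (2 * (m i * φ T (m i)))) := by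
          rw [← g3, ← g3', heq]
      _ = (2 * (n i * m i + m i * n i)) *
            (2 * (φ T (n i) * φ T (m i) + φ T (m i) * φ T (n i))) := by ring
      _ = _ := by rw [g1, g1']; ring
  -- At positions whose difference is not an exponent difference of the left-hand side, the
  -- coefficients at `(i, j)` and `(i, j + T)` form a nonsingular system for `n_j`, `m_j`.
  have claimB : ∀ i j, (n i ≠ 0 ∨ m i ≠ 0) → j - i ≠ 0 → j - i ≠ T → j - i ≠ δ →
      j - i ≠ δ + T → j - i ≠ -δ → j - i ≠ -δ + T → n j = 0 ∧ m j = 0 := by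
    intro i j hi k1 k2 k3 k4 k5 k6
    have hd : j + T - i = j - i + T := by abel
    have sh : ∀ u v : ι, u ≠ v + T → u + T ≠ v := fun u v h h' => h (by rw [← h', hadT])
    have g1 := ceq1 i j
    have g2 := ceq1 i (j + T)
    rw [hcZ0 _ _ _ k1 k2 k3 k4 k5 k6] at g1
    rw [hcZ0 _ _ _ (by rw [hd]; exact sh _ _ (by simpa using k2))
      (by rw [hd]; exact sh _ _ (by simpa [hTT] using k1)) (by rw [hd]; exact sh _ _ k4)
      (by rw [hd]; exact sh _ _ (by rwa [hadT])) (by rw [hd]; exact sh _ _ k6)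
      (by rw [hd]; exact sh _ _ (by rwa [hadT])), hmT, hnT] at g2
    have g1' := (mul_eq_zero.1 g1).resolve_left two
    have g2' := congrArg (φ T) ((mul_eq_zero.1 g2).resolve_left two)
    simp only [map_add, map_mul, hinv, map_zero] at g2'
    exact system_zero (claimA i hi) g1' g2'
  obtain ⟨i, hi⟩ : ∃ i, n i ≠ 0 := by
    by_contra! h
    obtain ⟨x, hx⟩ := hN0
    exact hx (by simp [hN, h])
  have hd : i + δ' - i = δ' := by abel
  have hdT : i + δ' + T - i = δ' + T := by abel
  have sh : ∀ u v : ι, u ≠ v + T → u + T ≠ v := fun u v h h' => h (by rw [← h', hadT])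
  obtain ⟨z1, z2⟩ := claimB i (i + δ') (Or.inl hi) (by rwa [hd]) (by rwa [hd]) (by rwa [hd])
    (by rwa [hd]) (by rwa [hd]) (by rwa [hd])
  -- With `n` and `m` zero at `i + δ'`, the second component pairs index `i` only with its own
  -- `δ'`-twist, again through a nonsingular system, now for `β n_i` and `β̄ m_i`.
  have g1 := ceq2 i (i + δ')
  have g2 := ceq2 i (i + δ' + T)
  rw [hcZ0 _ _ _ (by rwa [hd]) (by rwa [hd]) (by rwa [hd]) (by rwa [hd]) (by rwa [hd])
    (by rwa [hd]), z1, z2] at g1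
  rw [hcZ0 _ _ _ (by rw [hdT]; exact sh _ _ (by simpa using h0T))
    (by rw [hdT]; exact sh _ _ (by simpa [hTT] using h0)) (by rw [hdT]; exact sh _ _ h1T)
    (by rw [hdT]; exact sh _ _ (by rwa [hadT])) (by rw [hdT]; exact sh _ _ h2T)
    (by rw [hdT]; exact sh _ _ (by rwa [hadT])), hmT, hnT, z1, z2] at g2
  have e1 : i + δ' + T - δ' = i + T := by abel
  simp only [hc, hc', add_sub_cancel_right, e1, hmT, hnT, map_zero, mul_zero, zero_add] at g1 g2
  have g1' := (mul_eq_zero.1 g1).resolve_left (mul_ne_zero two hω0)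
  have g2' := (mul_eq_zero.1 g2).resolve_left (mul_ne_zero two hω0)
  have hne := claimA i (Or.inl hi)
  have hne' : φ δ' (n i) * φ δ' (φ T (n i)) ≠ φ δ' (m i) * φ δ' (φ T (m i)) := by
    rw [← map_mul, ← map_mul]
    exact fun h => hne ((φ δ').injective h)
  have := system_zero (u := β * n i) (v := φ T β * m i)
    (x := φ δ' (m i)) (y := φ δ' (n i)) (x' := φ δ' (φ T (m i))) (y' := φ δ' (φ T (n i)))
    (Ne.symm hne') (by linear_combination g1') (by linear_combination g2')
  exact (mul_ne_zero hβ hi) this.1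


/-! ### Powers of the Frobenius -/

section Frobenius

variable {F : Type*} [Field F] [Fintype F] {p n : ℕ} [Fact p.Prime] [CharP F p]

variable (F p n) in
/-- The powers `x ↦ x ^ p ^ k` of the Frobenius of a field with `p ^ n` elements, indexed by
`ZMod n` through the representative of `k` in `[0, n)`. -/
def frobFamily (k : ZMod n) : F →+* F := iterateFrobenius F p k.val

theorem frobFamily_natCast (hcard : Fintype.card F = p ^ n) (i : ℕ) (x : F) :
    frobFamily F p n (i : ZMod n) x = x ^ p ^ i := by
  rw [frobFamily, iterateFrobenius_def, ZMod.val_natCast]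
  have h : ∀ k, x ^ (p ^ n) ^ k = x := fun k => by
    rw [← hcard, FiniteField.pow_card_pow]
  conv_rhs => rw [← Nat.div_add_mod i n, pow_add, pow_mul, pow_mul, h]

theorem frobFamily_add [NeZero n] (hcard : Fintype.card F = p ^ n) (i j : ZMod n) (x : F) :
    frobFamily F p n (i + j) x = frobFamily F p n i (frobFamily F p n j x) := by
  obtain ⟨i, rfl⟩ := ZMod.natCast_zmod_surjective i
  obtain ⟨j, rfl⟩ := ZMod.natCast_zmod_surjective j
  rw [← Nat.cast_add, frobFamily_natCast hcard, frobFamily_natCast hcard,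
    frobFamily_natCast hcard, ← pow_mul, add_comm, pow_add]

/-- Distinct Frobenius powers differ on a generator of the multiplicative group. -/
theorem frobFamily_injective (hcard : Fintype.card F = p ^ n) (hp : 3 ≤ p) (hn : n ≠ 0) :
    Function.Injective (frobFamily F p n) := by
  have : NeZero n := ⟨hn⟩
  obtain ⟨g, hg⟩ := IsCyclic.exists_generator (α := Fˣ)
  have hord : orderOf g = p ^ n - 1 := by
    rw [orderOf_eq_card_of_forall_mem_zpowers hg, Nat.card_units, Nat.card_eq_fintype_card, hcard]
  have hlt : ∀ k : ZMod n, p ^ k.val < orderOf g := fun k => by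
    have h1 : p ^ k.val * 3 ≤ p ^ n := calc
      p ^ k.val * 3 ≤ p ^ k.val * p := Nat.mul_le_mul_left _ hp
      _ = p ^ (k.val + 1) := (pow_succ _ _).symm
      _ ≤ p ^ n := Nat.pow_le_pow_right (by omega) (ZMod.val_lt k)
    have h2 : 0 < p ^ k.val := Nat.pow_pos (by omega)
    omega
  intro i j hij
  have h := DFunLike.congr_fun hij (g : F)
  simp only [frobFamily, iterateFrobenius_def] at h
  have h' : g ^ p ^ i.val = g ^ p ^ j.val := by
    ext
    simpa using h
  exact ZMod.val_injective n (Nat.pow_right_injective (by omega : 2 ≤ p)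
    (pow_injOn_Iio_orderOf (hlt i) (hlt j) h'))

end Frobenius

end BH

/-- Section 4 setup: one has d' = d or d' = l − d. -/
theorem bh_dprime_eq_d_or_l_sub_d (p h l d d' q : ℕ) (hp : p.Prime) (hpodd : Odd p)
    (hh : 0 < h) (hq : q = p ^ h) (hl : 2 < l)
    (hd1 : 1 ≤ d) (hd2 : d ≤ l - 1) (hgd : Nat.gcd l d = 1) (hod : Odd (l + d))
    (hd'1 : 1 ≤ d') (hd'2 : d' ≤ l - 1) (hgd' : Nat.gcd l d' = 1) (hod' : Odd (l + d'))
    (F : Type*) [Field F] [Fintype F] (hcard : Fintype.card F = q ^ (2 * l))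
    (β ω : F) (hβ : ∀ w : F, β ≠ w ^ 2) (hω : ω ≠ 0) (hωtr : ω + ω ^ q ^ l = 0)
    (ξ : F) (hξ0 : ξ ≠ 0) (hξ : ξ ^ (q ^ (l + d) - 1) = β ^ (1 - (q : ℤ) ^ l))
    (a b : F) (ha : a ^ q = a) (hb : b ^ q = b)
    (hns : ∀ w : F, w ^ q = w → a ^ 2 - b ^ 2 * ξ ^ (q ^ l + 1) ≠ w ^ 2)
    (L' N' : F → F) (hL'b : Function.Bijective L')
    (hL'a : ∀ x y : F, L' (x + y) = L' x + L' y)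
    (hN'b : Function.Bijective N') (hN'a : ∀ x y : F, N' (x + y) = N' x + N' y)
    (hiso : ∀ x y : F, L' (a * bhMul q l d β ω x y) +
        L' (b * bhMul q l d β ω (ξ * x ^ q ^ l) y) = bhMul q l d' β ω (N' x) (N' y))
    (bb aa : ℕ → F) (hbbper : ∀ i : ℕ, bb (i + 2 * l * h) = bb i)
    (haaper : ∀ i : ℕ, aa (i + 2 * l * h) = aa i)
    (hN'c : ∀ x : F, N' x = ∑ i ∈ Finset.range (2 * l * h), bb i * x ^ p ^ i)
    (hL'c : ∀ x : F, L' x = ∑ i ∈ Finset.range (2 * l * h), aa i * x ^ p ^ i) :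
    d' = d ∨ d' = l - d := by
  have hn0 : 2 * l * h ≠ 0 := by positivity
  have hcard' : Fintype.card F = p ^ (2 * l * h) := by
    rw [hcard, hq, ← pow_mul]
    congr 1
    ring
  have : Fact p.Prime := ⟨hp⟩
  have : CharP F p := charP_of_card_eq_prime_pow hcard'
  have hq0 : q ≠ 0 := by rw [hq]; exact pow_ne_zero _ hp.ne_zero
  have hp3 : 3 ≤ p := by
    have := hp.two_le
    rcases hpodd with ⟨k, rfl⟩
    omega
  have two : (2 : F) ≠ 0 := by
    intro h2
    have : p ∣ 2 := (CharP.cast_eq_zero_iff F p 2).1 (by exact_mod_cast h2)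
    have := Nat.le_of_dvd (by norm_num) this
    omega
  generalize hn : 2 * l * h = n at *
  have : NeZero n := ⟨hn0⟩
  have key : ∀ e : ℕ, ∀ x : F,
      BH.frobFamily F p n ((e * h : ℕ) : ZMod n) x = x ^ q ^ e := fun e x => by
    rw [BH.frobFamily_natCast hcard', hq, ← pow_mul, mul_comm h e]
  have hsum : ∀ (u : ℕ → F) (x : F), ∑ i ∈ Finset.range n, u i * x ^ p ^ i =
      ∑ k : ZMod n, u k.val * BH.frobFamily F p n k x := fun u x => by
    refine Finset.sum_bij' (fun i _ => (i : ZMod n)) (fun k _ => k.val) (by simp)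
      (fun k _ => Finset.mem_range.2 (ZMod.val_lt k)) (fun i hi => ?_) (by simp) (fun i hi => ?_)
    · exact ZMod.val_cast_of_lt (Finset.mem_range.1 hi)
    · rw [BH.frobFamily_natCast hcard', ZMod.val_cast_of_lt (Finset.mem_range.1 hi)]
  have hfix : ∀ x : F, x ^ q = x → x ^ q ^ l = x := fun x hx => by
    have : ∀ k, x ^ q ^ k = x := fun k => by
      induction k with
      | zero => simp
      | succ k ih => rw [pow_succ, pow_mul, ih, hx]
    exact this l
  -- Congruences modulo `lh` between multiples of `h` are congruences modulo `l`.
  have hdvd : ∀ u : ℤ, ((u * h : ℤ) : ZMod n) = 0 ∨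
      ((u * h : ℤ) : ZMod n) = ((l * h : ℕ) : ZMod n) → (l : ℤ) ∣ u := by
    have hh' : (h : ℤ) ≠ 0 := by exact_mod_cast hh.ne'
    rintro u (hu | hu)
    · rw [ZMod.intCast_zmod_eq_zero_iff_dvd, ← hn] at hu
      push_cast at hu
      exact Dvd.dvd.trans ⟨2, mul_comm _ _⟩ (Int.dvd_of_mul_dvd_mul_right hh' hu)
    · have hu' : (((u - l) * h : ℤ) : ZMod n) = 0 := by
        push_cast at hu ⊢
        rw [sub_mul, hu, sub_self]
      rw [ZMod.intCast_zmod_eq_zero_iff_dvd, ← hn] at hu'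
      push_cast at hu'
      have := Dvd.dvd.trans ⟨2, mul_comm _ _⟩ (Int.dvd_of_mul_dvd_mul_right hh' hu')
      simpa using dvd_add this (dvd_refl (l : ℤ))
  by_contra! hcon
  obtain ⟨hc1, hc2⟩ := hcon
  -- The exponents in play lie strictly between `-l` and `2l`, where the only multiples of `l`
  -- are `0` and `l`.
  have nd : ∀ u : ℤ, -(l : ℤ) < u → u < 2 * l → u ≠ 0 → u ≠ l → ¬ (l : ℤ) ∣ u := by
    rintro u g1 g2 g3 g4 ⟨k, rfl⟩
    have hl0 : (0 : ℤ) < l := by positivity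
    have k1 : -1 < k := by nlinarith
    have k2 : k < 2 := by nlinarith
    interval_cases k <;> simp at g3 g4
  have ndd := nd d (by omega) (by omega) (by omega) (by omega)
  have ndd' := nd d' (by omega) (by omega) (by omega) (by omega)
  have nds := nd (d' - d) (by omega) (by omega) (by omega) (by omega)
  have nda := nd (d' + d) (by omega) (by omega) (by omega) (by omega)
  refine BH.no_isotopism (BH.frobFamily F p n) (BH.frobFamily_injective hcard' hp3 hn0)
    (BH.frobFamily_add hcard') ((l * h : ℕ) : ZMod n) ((d * h : ℕ) : ZMod n)
    ((d' * h : ℕ) : ZMod n) ?_ (fun e => ndd (hdvd _ (Or.inl (by push_cast at e ⊢; exact e))))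
    (fun e => ndd (hdvd _ (Or.inr (by push_cast at e ⊢; exact e))))
    (fun e => ndd' (hdvd _ (Or.inl (by push_cast at e ⊢; exact e))))
    (fun e => ndd' (hdvd _ (Or.inr (by push_cast at e ⊢; exact e))))
    (fun e => nds (hdvd _ (Or.inl (by push_cast at e ⊢; linear_combination e))))
    (fun e => nds (hdvd _ (Or.inr (by push_cast at e ⊢; linear_combination e))))
    (fun e => nda (hdvd _ (Or.inl (by push_cast at e ⊢; linear_combination e))))
    (fun e => nda (hdvd _ (Or.inr (by push_cast at e ⊢; linear_combination e))))
    two β ω ξ a b (fun h0 => hβ 0 (by simpa using h0)) hω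
    (by rw [key]; linear_combination hωtr)
    (by rw [key, hfix a ha]) (by rw [key, hfix b hb]) ?_ L' N' (fun k => aa k.val)
    (fun k => bb k.val) (fun x => by rw [hL'c, hsum]) (fun x => by rw [hN'c, hsum])
    ((hN'b.surjective 1).imp fun x hx => by rw [hx]; exact one_ne_zero)
    (fun e x y => BH.frobFamily F p n ((l * h : ℕ) : ZMod n) x * y +
      x * BH.frobFamily F p n ((l * h : ℕ) : ZMod n) y +
      (β * (BH.frobFamily F p n e x * y + x * BH.frobFamily F p n e y) +
        BH.frobFamily F p n ((l * h : ℕ) : ZMod n) β *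
        BH.frobFamily F p n ((l * h : ℕ) : ZMod n)
          (BH.frobFamily F p n e x * y + x * BH.frobFamily F p n e y)) * ω)
    (fun _ _ _ => rfl) ?_
  · rw [← Nat.cast_add, ZMod.natCast_eq_zero_iff, ← hn]
    exact ⟨1, by ring⟩
  · rw [key]
    intro e
    -- a nonsquare is in particular not the square of `0`
    refine hns 0 (zero_pow hq0) ?_
    rw [e, pow_succ]
    ring
  · intro x y
    simp only [key]
    exact hiso x y
end

section
/- In the Section 4 setup, let i be the minimal index in {0, …, 2lh − 1} with b_i ≠ 0. Then b_j = 0 for every index j distinct from i and from i + lh; consequently N'(x) = b_i·x^(p^i) + b_{i+lh}·x^(p^(i+lh)) for all x ∈ F. -/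
/-! ### Coefficients of biadditive maps -/

/-- An abstract model of the Frobenius powers of a finite field: a finite abelian group `ι`
(here `ZMod n`) acting on `F` by field endomorphisms which are linearly independent over `F`. -/
structure FrobAction (ι F : Type*) [AddCommGroup ι] [Fintype ι] [Field F] where
  /-- The endomorphism attached to an index. -/
  fr : ι → F →+* F
  fr_zero : ∀ x, fr 0 x = x
  fr_add : ∀ j k x, fr (j + k) x = fr j (fr k x)
  indep : ∀ c : ι → F, (∀ x, ∑ k, c k * fr k x = 0) → ∀ k, c k = 0

namespace FrobAction

variable {ι F : Type*} [AddCommGroup ι] [Fintype ι] [DecidableEq ι] [Field F]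
  (Φ : FrobAction ι F)

/-- The additive map `z ↦ ∑ f_k · fr_k z` with coefficient family `f`. -/
def lin (f : ι → F) : F →+ F where
  toFun z := ∑ k, f k * Φ.fr k z
  map_zero' := by simp
  map_add' x y := by simp [mul_add, Finset.sum_add_distrib]

/-- The coefficient family of `fr_s ∘ lin f`. -/
def sh (s : ι) (f : ι → F) (u : ι) : F := Φ.fr s (f (u - s))

omit [DecidableEq ι] in
lemma lin_sh (s : ι) (f : ι → F) (z : F) : Φ.lin (Φ.sh s f) z = Φ.fr s (Φ.lin f z) := by
  simp only [lin, sh, AddMonoidHom.coe_mk, ZeroHom.coe_mk, map_sum, map_mul]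
  rw [← Equiv.sum_comp (Equiv.addRight s)]
  refine Finset.sum_congr rfl fun k _ => ?_
  simp only [Equiv.coe_addRight, add_sub_cancel_right]
  rw [add_comm k s, Φ.fr_add]

/-- The biadditive map `B` has coefficients `c`: `B x y = ∑ c_{u,v} · fr_u x · fr_v y`. -/
def HC (B : F → F → F) (c : ι → ι → F) : Prop :=
  ∀ x y, B x y = ∑ u, ∑ v, c u v * Φ.fr u x * Φ.fr v y

variable {Φ}

omit [DecidableEq ι] in
lemma HC.add {B B' : F → F → F} {c c' : ι → ι → F} (h : Φ.HC B c) (h' : Φ.HC B' c') :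
    Φ.HC (fun x y => B x y + B' x y) (fun u v => c u v + c' u v) := by
  intro x y
  simp only [h x y, h' x y, add_mul, Finset.sum_add_distrib]

omit [DecidableEq ι] in
lemma HC.smul {B : F → F → F} {c : ι → ι → F} (r : F) (h : Φ.HC B c) :
    Φ.HC (fun x y => r * B x y) (fun u v => r * c u v) := by
  intro x y
  simp only [h x y, mul_assoc, Finset.mul_sum]

omit [DecidableEq ι] in
lemma HC.unique {B : F → F → F} {c c' : ι → ι → F} (h : Φ.HC B c) (h' : Φ.HC B c') (u v : ι) :
    c u v = c' u v := by
  have key : ∀ y u, ∑ v, (c u v - c' u v) * Φ.fr v y = 0 := by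
    intro y
    refine Φ.indep _ fun x => ?_
    have e := (h x y).symm.trans (h' x y)
    rw [← sub_eq_zero, ← Finset.sum_sub_distrib] at e
    rw [← e]
    refine Finset.sum_congr rfl fun u _ => ?_
    rw [← Finset.sum_sub_distrib, Finset.sum_mul]
    exact Finset.sum_congr rfl fun v _ => by ring
  exact sub_eq_zero.1 (Φ.indep _ (fun y => key y u) v)

omit [DecidableEq ι] in
lemma HC.prod (f g : ι → F) :
    Φ.HC (fun x y => Φ.lin f x * Φ.lin g y) (fun u v => f u * g v) := by
  intro x y
  simp only [lin, AddMonoidHom.coe_mk, ZeroHom.coe_mk, Finset.sum_mul_sum]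
  exact Finset.sum_congr rfl fun u _ => Finset.sum_congr rfl fun v _ => by ring

/-- An additive map applied to a monomial `ρ · fr_s x · fr_t y` only has coefficients on the
diagonal `u - v = s - t`. -/
lemma HC.term (α : ι → F) (ρ : F) (s t r : ι) (hr : s - t = r) :
    Φ.HC (fun x y => Φ.lin α (ρ * Φ.fr s x * Φ.fr t y))
      (fun u v => if u - v = r then α (u - s) * Φ.fr (u - s) ρ else 0) := by
  intro x y
  have inner : ∀ u, ∑ v, (if u - v = r then α (u - s) * Φ.fr (u - s) ρ else 0) *
      Φ.fr u x * Φ.fr v y = α (u - s) * Φ.fr (u - s) ρ * Φ.fr u x * Φ.fr (u - r) y := by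
    intro u
    rw [Finset.sum_eq_single (u - r)]
    · simp
    · intro v _ hv
      rw [if_neg, zero_mul, zero_mul]
      rintro rfl
      exact hv (by abel)
    · simp
  simp only [inner]
  rw [← Equiv.sum_comp (Equiv.addRight s)]
  simp only [lin, AddMonoidHom.coe_mk, ZeroHom.coe_mk, map_mul, Equiv.coe_addRight,
    add_sub_cancel_right]
  refine Finset.sum_congr rfl fun k _ => ?_
  have : k + s - r = k + t := by rw [← hr]; abel
  rw [this, Φ.fr_add, Φ.fr_add]
  ring

variable (Φ)

/-! ### The isotopism as coefficient identities -/

/-- The Budaghyan–Helleseth multiplication expressed through the Frobenius action; `lam` is the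
index of the involution and `e` that of the twist. -/
def bh (lam e : ι) (β ω x y : F) : F :=
  Φ.fr lam x * y + x * Φ.fr lam y +
    (β * (Φ.fr e x * y + x * Φ.fr e y) + Φ.fr lam β * Φ.fr lam (Φ.fr e x * y + x * Φ.fr e y)) * ω

/-- The index differences on which the left-hand side of the isotopism may have coefficients. -/
def Special (lam del e : ι) : Prop :=
  e = 0 ∨ e = lam ∨ e = del ∨ e = -del ∨ e = del + lam ∨ e = -del + lam

variable {lam del tau : ι} {β ω ξ a b : F}

omit [DecidableEq ι] in
lemma fr_invol (h2 : lam + lam = 0) (x : F) : Φ.fr lam (Φ.fr lam x) = x := by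
  rw [← Φ.fr_add, h2, Φ.fr_zero]

omit [DecidableEq ι] in
lemma fr_comm (j k : ι) (x : F) : Φ.fr j (Φ.fr k x) = Φ.fr k (Φ.fr j x) := by
  rw [← Φ.fr_add, add_comm, Φ.fr_add]

/-- Coefficients of the left-hand side of the isotopism. Only those on the differences `0` and
`lam` are needed explicitly. -/
lemma lhs_coef (h2 : lam + lam = 0) (α : ι → F) (β ω ξ a b : F) : ∃ g₂ g₃ g₄ g₅ : ι → F,
    Φ.HC (fun x y => Φ.lin α (a * Φ.bh lam del β ω x y +
        b * Φ.bh lam del β ω (ξ * Φ.fr lam x) y))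
      (fun u v =>
        (if u - v = 0 then α u * Φ.fr u (b * Φ.fr lam ξ) +
            α (u - lam) * Φ.fr (u - lam) (b * ξ) else 0) +
        (if u - v = lam then α u * Φ.fr u a + α (u - lam) * Φ.fr (u - lam) a else 0) +
        (if u - v = del then g₂ u else 0) + (if u - v = -del then g₃ u else 0) +
        (if u - v = del + lam then g₄ u else 0) +
        (if u - v = -del + lam then g₅ u else 0)) := by
  have hneg : -lam = lam := neg_eq_of_add_eq_zero_left h2
  have t := fun ρ s t r hr => HC.term (Φ := Φ) α ρ s t r hr
  have H := ((((((((((((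
    t a lam 0 lam (by simp)).add
    (t a 0 lam lam (by simp [hneg]))).add
    (t (a * ω * β) del 0 del (by simp))).add
    (t (a * ω * β) 0 del (-del) (by simp))).add
    (t (a * ω * Φ.fr lam β) (lam + del) lam del (by abel))).add
    (t (a * ω * Φ.fr lam β) lam (lam + del) (-del) (by abel))).add
    (t (b * Φ.fr lam ξ) 0 0 0 (by simp))).add
    (t (b * ξ) lam lam 0 (by simp))).add
    (t (b * ω * β * Φ.fr del ξ) (del + lam) 0 (del + lam) (by simp))).add
    (t (b * ω * β * ξ) lam del (-del + lam) (by abel))).add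
    (t (b * ω * Φ.fr lam β * Φ.fr lam (Φ.fr del ξ)) del lam (del + lam)
      (by rw [sub_eq_add_neg, hneg]))).add
    (t (b * ω * Φ.fr lam β * Φ.fr lam ξ) 0 (lam + del) (-del + lam)
      (by rw [zero_sub, neg_add_rev, hneg])))
  refine ⟨fun u => α (u - del) * Φ.fr (u - del) (a * ω * β) +
      α (u - (lam + del)) * Φ.fr (u - (lam + del)) (a * ω * Φ.fr lam β),
    fun u => α u * Φ.fr u (a * ω * β) + α (u - lam) * Φ.fr (u - lam) (a * ω * Φ.fr lam β),
    fun u => α (u - (del + lam)) * Φ.fr (u - (del + lam)) (b * ω * β * Φ.fr del ξ) +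
      α (u - del) * Φ.fr (u - del) (b * ω * Φ.fr lam β * Φ.fr lam (Φ.fr del ξ)),
    fun u => α (u - lam) * Φ.fr (u - lam) (b * ω * β * ξ) +
      α u * Φ.fr u (b * ω * Φ.fr lam β * Φ.fr lam ξ), ?_⟩
  · intro x y
    have e := H x y
    have e1 : a * Φ.bh lam del β ω x y + b * Φ.bh lam del β ω (ξ * Φ.fr lam x) y =
        a * Φ.fr lam x * Φ.fr 0 y + a * Φ.fr 0 x * Φ.fr lam y +
        a * ω * β * Φ.fr del x * Φ.fr 0 y + a * ω * β * Φ.fr 0 x * Φ.fr del y +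
        a * ω * Φ.fr lam β * Φ.fr (lam + del) x * Φ.fr lam y +
        a * ω * Φ.fr lam β * Φ.fr lam x * Φ.fr (lam + del) y +
        b * Φ.fr lam ξ * Φ.fr 0 x * Φ.fr 0 y + b * ξ * Φ.fr lam x * Φ.fr lam y +
        b * ω * β * Φ.fr del ξ * Φ.fr (del + lam) x * Φ.fr 0 y +
        b * ω * β * ξ * Φ.fr lam x * Φ.fr del y +
        b * ω * Φ.fr lam β * Φ.fr lam (Φ.fr del ξ) * Φ.fr del x * Φ.fr lam y +
        b * ω * Φ.fr lam β * Φ.fr lam ξ * Φ.fr 0 x * Φ.fr (lam + del) y := by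
      have e2 : Φ.fr lam (Φ.fr del (Φ.fr lam x)) = Φ.fr del x := by
        rw [Φ.fr_comm del lam, Φ.fr_invol h2]
      simp only [bh, map_add, map_mul, Φ.fr_add, Φ.fr_zero, Φ.fr_invol h2, e2]
      ring
    beta_reduce
    rw [e1]
    simp only [map_add]
    refine e.trans ?_
    beta_reduce
    refine Finset.sum_congr rfl fun u _ => Finset.sum_congr rfl fun v _ => ?_
    have split : ∀ (P : Prop) [Decidable P] (r s : F),
        (if P then r else 0) + (if P then s else 0) = if P then r + s else 0 := by
      intro P _ r s; split_ifs <;> simp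
    congr 2
    simp only [sub_zero, ← split]
    ring

/-- The isotopism equation and the nondegeneracy facts it is used with: `f` and `A` are the
coefficient families of `N'` and `L'`, and `lam`, `del`, `tau` are the indices `lh`, `dh`, `d'h`. -/
structure Setup (lam del tau : ι) (β ω ξ a b : F) (f A : ι → F) : Prop where
  h2 : lam + lam = 0
  lam0 : lam ≠ 0
  del0 : del ≠ 0
  dellam : del ≠ lam
  two : (2 : F) ≠ 0
  hβ : β ≠ 0
  hω : ω ≠ 0
  hωtr : Φ.fr lam ω = -ω
  ha : Φ.fr lam a = a
  hb : Φ.fr lam b = b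
  disc : a ^ 2 - b ^ 2 * (ξ * Φ.fr lam ξ) ≠ 0
  iso : ∀ x y, Φ.lin A (a * Φ.bh lam del β ω x y + b * Φ.bh lam del β ω (ξ * Φ.fr lam x) y) =
    Φ.bh lam tau β ω (Φ.lin f x) (Φ.lin f y)

variable {Φ} {f A : ι → F}

omit [DecidableEq ι] in
/-- The trace part of the isotopism. -/
lemma Setup.iso1 (S : Φ.Setup lam del tau β ω ξ a b f A) (x y : F) :
    Φ.lin (fun k => A k + Φ.sh lam A k)
      (a * Φ.bh lam del β ω x y + b * Φ.bh lam del β ω (ξ * Φ.fr lam x) y) =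
    2 * (Φ.lin f x * Φ.lin (Φ.sh lam f) y + Φ.lin (Φ.sh lam f) x * Φ.lin f y) := by
  have e : ∀ z, Φ.lin (fun k => A k + Φ.sh lam A k) z = Φ.lin A z + Φ.fr lam (Φ.lin A z) := by
    intro z
    rw [← lin_sh]
    simp [lin, add_mul, Finset.sum_add_distrib]
  rw [e, S.iso, lin_sh, lin_sh]
  simp only [bh, map_add, map_mul, Φ.fr_invol S.h2, S.hωtr]
  ring

omit [DecidableEq ι] in
/-- The `ω`-part of the isotopism. -/
lemma Setup.iso2 (S : Φ.Setup lam del tau β ω ξ a b f A) (x y : F) :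
    Φ.lin (fun k => A k - Φ.sh lam A k)
      (a * Φ.bh lam del β ω x y + b * Φ.bh lam del β ω (ξ * Φ.fr lam x) y) =
    2 * ω * (β * (Φ.lin (Φ.sh tau f) x * Φ.lin f y + Φ.lin f x * Φ.lin (Φ.sh tau f) y) +
      Φ.fr lam β * (Φ.lin (Φ.sh tau (Φ.sh lam f)) x * Φ.lin (Φ.sh lam f) y +
        Φ.lin (Φ.sh lam f) x * Φ.lin (Φ.sh tau (Φ.sh lam f)) y)) := by
  have e : ∀ z, Φ.lin (fun k => A k - Φ.sh lam A k) z = Φ.lin A z - Φ.fr lam (Φ.lin A z) := by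
    intro z
    rw [← lin_sh]
    simp [lin, sub_mul, Finset.sum_sub_distrib]
  rw [e, S.iso]
  simp only [lin_sh]
  simp only [bh, map_add, map_mul, Φ.fr_invol S.h2, S.hωtr, Φ.fr_comm tau lam]
  ring

omit [DecidableEq ι] in
lemma sh_add_self (s : ι) (g : ι → F) (u : ι) : Φ.sh s g (u + s) = Φ.fr s (g u) := by
  simp [sh]

omit [DecidableEq ι] in
lemma Setup.f_add (S : Φ.Setup lam del tau β ω ξ a b f A) (u : ι) :
    f (u + lam) = Φ.fr lam (Φ.sh lam f u) := by
  have : u - lam = u + lam := by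
    rw [sub_eq_add_neg, neg_eq_of_add_eq_zero_left S.h2]
  rw [sh, Φ.fr_invol S.h2, this]

/-- Trace-part coefficients vanish off the special differences. -/
lemma Setup.van1 (S : Φ.Setup lam del tau β ω ξ a b f A) (u v : ι)
    (h : ¬ Special lam del (u - v)) :
    f u * Φ.sh lam f v + Φ.sh lam f u * f v = 0 := by
  obtain ⟨g₂, g₃, g₄, g₅, H⟩ := Φ.lhs_coef (del := del) S.h2 (fun k => A k + Φ.sh lam A k) β ω ξ a b
  have H' := ((HC.prod (Φ := Φ) f (Φ.sh lam f)).add (HC.prod (Φ.sh lam f) f)).smul 2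
  have e := H.unique (fun x y => (S.iso1 x y).trans (H' x y)) u v
  simp only [Special, not_or] at h
  simp only [h, if_false, add_zero] at e
  exact (mul_eq_zero.1 e.symm).resolve_left S.two

/-- Coefficients of the `ω`-part vanish off the special differences. -/
lemma Setup.van2 (S : Φ.Setup lam del tau β ω ξ a b f A) (u v : ι)
    (h : ¬ Special lam del (u - v)) :
    β * (Φ.sh tau f u * f v + f u * Φ.sh tau f v) +
      Φ.fr lam β * (Φ.sh tau (Φ.sh lam f) u * Φ.sh lam f v +
        Φ.sh lam f u * Φ.sh tau (Φ.sh lam f) v) = 0 := by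
  obtain ⟨g₂, g₃, g₄, g₅, H⟩ := Φ.lhs_coef (del := del) S.h2 (fun k => A k - Φ.sh lam A k) β ω ξ a b
  have H' := (((((HC.prod (Φ := Φ) (Φ.sh tau f) f).add (HC.prod f (Φ.sh tau f))).smul β).add
    (((HC.prod (Φ := Φ) (Φ.sh tau (Φ.sh lam f)) (Φ.sh lam f)).add
      (HC.prod (Φ.sh lam f) (Φ.sh tau (Φ.sh lam f)))).smul (Φ.fr lam β)))).smul (2 * ω)
  have e := H.unique (fun x y => (S.iso2 x y).trans (H' x y)) u v
  simp only [Special, not_or] at h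
  simp only [h, if_false, add_zero] at e
  exact (mul_eq_zero.1 e.symm).resolve_left (mul_ne_zero S.two S.hω)

/-! ### Support of the coefficient family of `N'` -/

/-- A vector isotropic for the hyperbolic form and orthogonal to its conjugate vanishes. -/
lemma zero_of_isotropic {F : Type*} [Field F] (σ : F →+* F) {c C : F} (h1 : c * C = 0)
    (h2 : c * σ c + C * σ C = 0) : c = 0 ∧ C = 0 := by
  rcases mul_eq_zero.1 h1 with rfl | rfl <;> simpa using h2

/-- With `w_u = (f u, sh lam f u)`, the Gram matrix of `w_u, w_{u+lam}` for the hyperbolic form is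
a multiple of the matrix with rows `(b ξ̄, a)`, `(a, b ξ)`. So if `w_u ≠ 0`, then `w_u` and
`w_{u+lam}` are linearly independent, and the discriminant is a square in the fixed field of
`fr lam`. -/
lemma Setup.gram (S : Φ.Setup lam del tau β ω ξ a b f A) (u : ι)
    (h : f u ≠ 0 ∨ Φ.sh lam f u ≠ 0) :
    f u * Φ.fr lam (f u) - Φ.sh lam f u * Φ.fr lam (Φ.sh lam f u) ≠ 0 ∧
    ∃ z, Φ.fr lam z = z ∧ z ^ 2 = a ^ 2 - b ^ 2 * (ξ * Φ.fr lam ξ) := by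
  obtain ⟨g₂, g₃, g₄, g₅, H⟩ := Φ.lhs_coef (del := del) S.h2 (fun k => A k + Φ.sh lam A k) β ω ξ a b
  have H' := ((HC.prod (Φ := Φ) f (Φ.sh lam f)).add (HC.prod (Φ.sh lam f) f)).smul 2
  have E := H.unique (fun x y => (S.iso1 x y).trans (H' x y))
  have hneg : -lam = lam := neg_eq_of_add_eq_zero_left S.h2
  have hsub : u - lam = u + lam := by rw [sub_eq_add_neg, hneg]
  have e1 := E u u
  have e2 := E u (u + lam)
  have n1 : (0 : ι) ≠ del + lam := fun h => S.dellam (by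
    rw [← hneg]; exact eq_neg_of_add_eq_zero_left h.symm)
  have n2 : (0 : ι) ≠ -del + lam := fun h => S.dellam (by
    rw [← sub_eq_zero, ← neg_eq_zero, h]; abel)
  have n3 : lam ≠ -del := fun h => n1 (by rw [h]; abel)
  have n4 : lam ≠ del + lam := fun h => S.del0 (by simpa using h)
  have n5 : lam ≠ -del + lam := fun h => S.del0 (by simpa using h)
  have hu : u - (u + lam) = lam := by rw [sub_add_cancel_left, hneg]
  have k1 : Φ.fr (u + lam) (b * ξ) = Φ.fr u (b * Φ.fr lam ξ) := by
    rw [Φ.fr_add, map_mul _ b ξ, S.hb]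
  have k2 : Φ.fr (u + lam) a = Φ.fr u a := by rw [Φ.fr_add, S.ha]
  simp only [sub_self, S.lam0.symm, S.del0.symm, n1, n2, if_true, if_false, add_zero,
    zero_eq_neg, S.del0, hsub, k1] at e1
  simp only [hu, S.lam0, S.dellam.symm, n3, n4, n5, if_true, if_false, add_zero, zero_add,
    hsub, k2, sh_add_self lam f u, S.f_add] at e2
  set α := A u + Φ.sh lam A u + (A (u + lam) + Φ.sh lam A (u + lam)) with hα
  have hαfix : Φ.fr lam α = α := by
    rw [hα, sh_add_self]
    simp only [map_add, sh, Φ.fr_invol S.h2, hsub]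
    ring
  set c := f u with hc
  set C := Φ.sh lam f u with hC
  have G1 : 4 * (c * C) = α * Φ.fr u (b * Φ.fr lam ξ) := by rw [hα]; linear_combination -e1
  have G2 : 2 * (c * Φ.fr lam c + C * Φ.fr lam C) = α * Φ.fr u a := by
    rw [hα]; linear_combination -e2
  have G3 : 4 * (Φ.fr lam c * Φ.fr lam C) = α * Φ.fr u (b * ξ) := by
    have := congrArg (Φ.fr lam) G1
    simp only [map_mul, hαfix, Φ.fr_comm lam u, Φ.fr_invol S.h2, S.hb, map_ofNat] at this
    rw [this, map_mul]
  have G : (2 * (c * Φ.fr lam c - C * Φ.fr lam C)) ^ 2 =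
      α ^ 2 * Φ.fr u (a ^ 2 - b ^ 2 * (ξ * Φ.fr lam ξ)) := by
    have : (2 * (c * Φ.fr lam c - C * Φ.fr lam C)) ^ 2 =
      (2 * (c * Φ.fr lam c + C * Φ.fr lam C)) ^ 2 -
        (4 * (c * C)) * (4 * (Φ.fr lam c * Φ.fr lam C)) := by ring
    rw [this, G1, G2, G3]
    simp only [map_sub, map_mul, map_pow]
    ring
  have inj : ∀ k (x : F), Φ.fr k x = 0 → x = 0 := fun k x => (map_eq_zero (Φ.fr k)).1
  have hα0 : α ≠ 0 := by
    intro h0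
    rw [h0, zero_mul] at G1 G2
    have four : (4 : F) ≠ 0 := by
      have := mul_ne_zero S.two S.two
      norm_num at this
      exact this
    -- `α = 0` would make `w_u` isotropic and orthogonal to `w_{u+lam}`.
    have := zero_of_isotropic (Φ.fr lam) ((mul_eq_zero.1 G1).resolve_left four)
      ((mul_eq_zero.1 G2).resolve_left S.two)
    exact h.elim (fun h => h this.1) (fun h => h this.2)
  refine ⟨fun h0 => ?_, ?_⟩
  · rw [h0, mul_zero, zero_pow two_ne_zero] at G
    rcases mul_eq_zero.1 G.symm with h1 | h1
    · exact hα0 (pow_eq_zero_iff two_ne_zero |>.1 h1)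
    · exact S.disc (inj _ _ h1)
  · -- `G` is twisted by `fr_u`; undo the twist.
    refine ⟨Φ.fr (-u) (2 * (c * Φ.fr lam c - C * Φ.fr lam C) / α), ?_, ?_⟩
    · rw [Φ.fr_comm]
      congr 1
      simp only [map_div₀, map_mul, map_sub, hαfix, Φ.fr_invol S.h2, map_ofNat]
      ring
    · rw [← map_pow, div_pow, G, mul_div_cancel_left₀ _ (pow_ne_zero 2 hα0), ← Φ.fr_add,
        neg_add_cancel, Φ.fr_zero]

/-- Cramer's rule for the homogeneous system with rows `(c, C)`, `(C', c')`. -/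
lemma two_eqs {x y c C c' C' : F} (hdet : c * c' - C * C' ≠ 0)
    (h1 : x * c + y * C = 0) (h2 : x * C' + y * c' = 0) : x = 0 ∧ y = 0 := by
  constructor
  · refine (mul_eq_zero.1 (?_ : x * (c * c' - C * C') = 0)).resolve_right hdet
    linear_combination c' * h1 - C * h2
  · refine (mul_eq_zero.1 (?_ : y * (c * c' - C * C') = 0)).resolve_right hdet
    linear_combination c * h2 - C' * h1

omit [Fintype ι] [DecidableEq ι] in
lemma special_add_lam (h2 : lam + lam = 0) {e : ι} (h : Special lam del (e + lam)) :
    Special lam del e := by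
  have hneg : -lam = lam := neg_eq_of_add_eq_zero_left h2
  have he : e = (e + lam) + lam := by rw [add_assoc, h2, add_zero]
  rw [he]
  generalize e + lam = e' at h
  rcases h with h | h | h | h | h | h <;> subst h <;> simp [Special, add_assoc, h2]

/-- Two indices in the support differ by a special difference. -/
lemma Setup.special (S : Φ.Setup lam del tau β ω ξ a b f A) (u v : ι)
    (hu : f u ≠ 0 ∨ Φ.sh lam f u ≠ 0) (hv : f v ≠ 0 ∨ Φ.sh lam f v ≠ 0) :
    Special lam del (u - v) := by
  by_contra hs
  have hneg : -lam = lam := neg_eq_of_add_eq_zero_left S.h2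
  have e1 := S.van1 u v hs
  have e2 := S.van1 u (v + lam) (fun h => hs (special_add_lam S.h2 (by
    convert h using 1
    rw [← sub_sub, sub_eq_add_neg _ lam, hneg])))
  rw [sh_add_self, S.f_add] at e2
  have := two_eqs (S.gram v hv).1 (x := Φ.sh lam f u) (y := f u)
    (by linear_combination e1) (by linear_combination e2)
  simp_all

/-- For `x`, `y` in the support, `tau + x - y` is special: otherwise the coefficients of the `ω`-part
at `(x + tau, y)` and `(x + lam + tau, y)` both vanish, which forces `w_y = 0`. -/
lemma Setup.special_tau (S : Φ.Setup lam del tau β ω ξ a b f A) (x y : ι)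
    (hx : f x ≠ 0 ∨ Φ.sh lam f x ≠ 0) (hy : f y ≠ 0 ∨ Φ.sh lam f y ≠ 0) :
    Special lam del (tau + x - y) := by
  by_contra hs
  have hs' : ¬ Special lam del (x + lam + tau - y) := fun h => hs (special_add_lam S.h2 (by
    convert h using 1; abel))
  have hs0 : ¬ Special lam del (x + tau - y) := by rwa [add_comm x]
  have z : ∀ u, ¬ Special lam del (u - y) → f u = 0 ∧ Φ.sh lam f u = 0 := by
    intro u hu
    by_contra hc
    rw [not_and_or] at hc
    exact hu (S.special u y hc hy)
  have e1 := S.van2 _ _ hs0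
  have e2 := S.van2 _ _ hs'
  obtain ⟨z1, z2⟩ := z _ hs0
  obtain ⟨z3, z4⟩ := z _ hs'
  rw [z1, z2, sh_add_self, sh_add_self] at e1
  rw [z3, z4, sh_add_self, sh_add_self, sh_add_self, S.f_add] at e2
  have hdet := (S.gram x hx).1
  have hdet' := (map_ne_zero (Φ.fr tau)).2 hdet
  simp only [map_sub, map_mul] at hdet'
  have := two_eqs hdet' (x := β * f y) (y := Φ.fr lam β * Φ.sh lam f y)
    (by linear_combination e1) (by linear_combination e2)
  have hβ' : Φ.fr lam β ≠ 0 := (map_ne_zero _).2 S.hβ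
  have hβ := S.hβ
  simp_all

end FrobAction

/-! ### Frobenius powers on a finite field -/

section Concrete

variable {F : Type*} [Field F] [Fintype F]

lemma pow_mod_eq {p n : ℕ} (hcard : Fintype.card F = p ^ n) (m : ℕ) (x : F) :
    x ^ p ^ (m % n) = x ^ p ^ m := by
  conv_rhs => rw [← Nat.mod_add_div m n, pow_add, pow_mul x, pow_mul p n, ← hcard]
  rw [FiniteField.pow_card_pow]

/-- The Frobenius action of `ZMod n` on a field with `p ^ n` elements. -/
def frobAct (p n : ℕ) [Fact p.Prime] [CharP F p] [NeZero n] (hcard : Fintype.card F = p ^ n) :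
    FrobAction (ZMod n) F where
  fr k := iterateFrobenius F p k.val
  fr_zero x := by simp
  fr_add j k x := by
    simp only [iterateFrobenius_def, ZMod.val_add]
    rw [pow_mod_eq hcard, ← pow_mul, ← pow_add, add_comm]
  indep c hc k := by
    have hp1 : 1 < p := (Fact.out : p.Prime).one_lt
    set P : Polynomial F := ∑ k : ZMod n, Polynomial.C (c k) * Polynomial.X ^ p ^ k.val with hP
    have h0 : P = 0 := by
      refine Polynomial.eq_zero_of_natDegree_lt_card_of_eval_eq_zero P Function.injective_id
        (fun x => ?_) ?_
      · rw [hP, Polynomial.eval_finsetSum]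
        simpa [iterateFrobenius_def] using hc x
      · rw [hcard]
        have hn : 0 < n := Nat.pos_of_ne_zero (NeZero.ne n)
        refine lt_of_le_of_lt (b := p ^ (n - 1)) ?_ (Nat.pow_lt_pow_right hp1 (by omega))
        refine Polynomial.natDegree_sum_le_of_forall_le _ _ fun k _ => ?_
        refine (Polynomial.natDegree_C_mul_X_pow_le _ _).trans ?_
        exact Nat.pow_le_pow_right (by omega) (by have := ZMod.val_lt k; omega)
    have h1 : P.coeff (p ^ k.val) = c k := by
      rw [hP, Polynomial.finsetSum_coeff, Finset.sum_eq_single k]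
      · simp
      · intro j _ hj
        rw [Polynomial.coeff_C_mul, Polynomial.coeff_X_pow, if_neg, mul_zero]
        intro h
        exact hj (ZMod.val_injective n (Nat.pow_right_injective hp1 h).symm)
      · simp
    rw [← h1, h0, Polynomial.coeff_zero]

lemma frobAct_fr {p n : ℕ} [Fact p.Prime] [CharP F p] [NeZero n]
    (hcard : Fintype.card F = p ^ n) (m : ℕ) (x : F) :
    (frobAct p n hcard).fr (m : ZMod n) x = x ^ p ^ m := by
  simp only [frobAct, iterateFrobenius_def, ZMod.val_natCast]
  exact pow_mod_eq hcard m x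

omit [Fintype F] in
lemma sum_range_zmod {n : ℕ} [NeZero n] (g : ℕ → F) :
    ∑ i ∈ Finset.range n, g i = ∑ k : ZMod n, g k.val := by
  refine Finset.sum_bij' (fun i _ => (i : ZMod n)) (fun k _ => k.val) (by simp)
    (fun k _ => Finset.mem_range.2 (ZMod.val_lt k)) (fun i hi => ?_) (by simp) (fun i hi => ?_)
  all_goals
    rw [ZMod.val_natCast, Nat.mod_eq_of_lt (Finset.mem_range.1 hi)]

lemma frobAct_lin {p n : ℕ} [Fact p.Prime] [CharP F p] [NeZero n]
    (hcard : Fintype.card F = p ^ n) (g : ℕ → F) (x : F) :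
    (frobAct p n hcard).lin (fun k => g k.val) x = ∑ i ∈ Finset.range n, g i * x ^ p ^ i := by
  rw [sum_range_zmod]
  rfl

omit [Fintype F] in
lemma pow_iter_fixed {q : ℕ} {a : F} (ha : a ^ q = a) (l : ℕ) : a ^ q ^ l = a := by
  induction l with
  | zero => simp
  | succ l ih => rw [pow_succ, pow_mul, ih, ha]

/-- The norm of `ξ` is fixed by `x ↦ x ^ q ^ (l + d)`. -/
lemma norm_fixed {q l d : ℕ} (hcard : Fintype.card F = q ^ (2 * l)) (hq : 0 < q)
    {β ξ : F} (hβ : β ≠ 0)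
    (hξ : ξ ^ (q ^ (l + d) - 1) = β ^ (1 - (q : ℤ) ^ l)) :
    (ξ * ξ ^ q ^ l) ^ q ^ (l + d) = ξ * ξ ^ q ^ l := by
  have hQ : ∀ x : F, (x ^ q ^ l) ^ q ^ l = x := by
    intro x
    rw [← pow_mul, ← pow_add, ← two_mul, ← hcard, FiniteField.pow_card]
  have e : ξ ^ (q ^ (l + d) - 1) = β / β ^ q ^ l := by
    rw [hξ, zpow_sub₀ hβ, zpow_one]
    norm_cast
  have hβ' : β ^ q ^ l ≠ 0 := pow_ne_zero _ hβ
  have e1 : (ξ * ξ ^ q ^ l) ^ (q ^ (l + d) - 1) = 1 := by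
    rw [mul_pow, pow_right_comm, e, div_pow, hQ]
    field_simp
  have hm : q ^ (l + d) = (q ^ (l + d) - 1) + 1 := (Nat.sub_add_cancel (Nat.pow_pos hq)).symm
  rw [hm, pow_succ, e1, one_mul]

omit [Fintype F] in
/-- For odd `l` a nonsquare of `𝔽_q` stays a nonsquare in `𝔽_{q^l}`. -/
lemma nonsquare_odd {q l : ℕ} (hl : Odd l) (hqo : Odd q) {D z : F} (hD : D ^ q = D)
    (hns : ∀ w : F, w ^ q = w → D ≠ w ^ 2) (hz : z ^ q ^ l = z) (hzD : z ^ 2 = D)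
    (h2 : (2 : F) ≠ 0) : False := by
  have h1 : (z ^ q) ^ 2 = z ^ 2 := by rw [pow_right_comm, hzD, hD]
  rcases sq_eq_sq_iff_eq_or_eq_neg.1 h1 with h | h
  · exact hns z h hzD.symm
  · have key : ∀ m, z ^ q ^ m = (-1) ^ m * z := by
      intro m
      induction m with
      | zero => simp
      | succ m ih =>
        rw [pow_succ, pow_mul, ih, mul_pow, h, ← pow_mul, mul_comm m q, pow_mul, hqo.neg_one_pow]
        ring
    rw [key, hl.neg_one_pow] at hz
    have hz0 : z = 0 := by
      have : 2 * z = 0 := by linear_combination -hz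
      exact (mul_eq_zero.1 this).resolve_left h2
    have hq0 : q ≠ 0 := by rintro rfl; exact absurd hqo (by decide)
    exact hns 0 (zero_pow hq0) (by rw [← hzD, hz0])

end Concrete

/-! ### Arithmetic of the index differences -/

/-- If `m·h ≡ m'·h` modulo `2lh` then `m ≡ m'` modulo `l`. -/
lemma dvd_of_cast_eq {l h : ℕ} (hh : 0 < h) {m m' : ℤ}
    (e : ((m * h : ℤ) : ZMod (2 * l * h)) = ((m' * h : ℤ) : ZMod (2 * l * h))) :
    (l : ℤ) ∣ m - m' := by
  rw [← sub_eq_zero, ← Int.cast_sub, ZMod.intCast_zmod_eq_zero_iff_dvd] at e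
  obtain ⟨c, hc⟩ := e
  refine ⟨2 * c, ?_⟩
  have hh' : (h : ℤ) ≠ 0 := by exact_mod_cast hh.ne'
  apply mul_right_cancel₀ hh'
  push_cast at hc
  linear_combination hc

/-- A special difference is `m·h` with `m ≡ 0, d, -d` modulo `l`. -/
lemma special_int {l h d : ℕ} {e : ZMod (2 * l * h)}
    (he : FrobAction.Special ((l * h : ℕ) : ZMod (2 * l * h)) ((d * h : ℕ) : ZMod (2 * l * h)) e) :
    ∃ m : ℤ, e = ((m * h : ℤ) : ZMod (2 * l * h)) ∧
      ((l : ℤ) ∣ m ∨ (l : ℤ) ∣ m - d ∨ (l : ℤ) ∣ m + d) := by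
  rcases he with h | h | h | h | h | h <;> subst h
  · exact ⟨0, by simp, by simp⟩
  · exact ⟨l, by push_cast; ring, by simp⟩
  · exact ⟨d, by push_cast; ring, by simp⟩
  · exact ⟨-d, by push_cast; ring, by simp⟩
  · exact ⟨d + l, by push_cast; ring, by simp⟩
  · exact ⟨-d + l, by push_cast; ring, by simp⟩

/-- A multiple of `l·h` is `0` or `l·h` modulo `2lh`. -/
lemma cast_mul_of_dvd {l h : ℕ} {m : ℤ} (hm : (l : ℤ) ∣ m) :
    ((m * h : ℤ) : ZMod (2 * l * h)) = 0 ∨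
      ((m * h : ℤ) : ZMod (2 * l * h)) = ((l * h : ℕ) : ZMod (2 * l * h)) := by
  have h0 : (2 * l * h : ZMod (2 * l * h)) = 0 := by
    have := ZMod.natCast_self (2 * l * h)
    push_cast at this
    exact this
  obtain ⟨c, rfl⟩ := hm
  rcases Int.even_or_odd' c with ⟨t, rfl | rfl⟩
  · left
    push_cast
    linear_combination (t : ZMod (2 * l * h)) * h0
  · right
    push_cast
    linear_combination (t : ZMod (2 * l * h)) * h0

/-- If `d'`, `d' + m`, `d' - m` all lie in `{0, d, -d}` modulo `l`, as does `m`, then `m ≡ 0`. -/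
lemma arith {l d d' : ℕ} (hl : 2 < l) (hl3 : l ≠ 3) (hgd : Nat.gcd l d = 1)
    (hd'1 : 1 ≤ d') (hd'2 : d' ≤ l - 1) {m : ℤ}
    (hm : (l : ℤ) ∣ m ∨ (l : ℤ) ∣ m - d ∨ (l : ℤ) ∣ m + d)
    (h0 : (l : ℤ) ∣ d' ∨ (l : ℤ) ∣ d' - d ∨ (l : ℤ) ∣ d' + d)
    (h1 : (l : ℤ) ∣ d' + m ∨ (l : ℤ) ∣ d' + m - d ∨ (l : ℤ) ∣ d' + m + d)
    (h2 : (l : ℤ) ∣ d' - m ∨ (l : ℤ) ∣ d' - m - d ∨ (l : ℤ) ∣ d' - m + d) : (l : ℤ) ∣ m := by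
  by_contra hm0
  have hcop : IsCoprime (l : ℤ) d := Nat.isCoprime_iff_coprime.2 hgd
  have nd' : ¬ (l : ℤ) ∣ d' := by
    intro h
    have := Nat.le_of_dvd (by omega) (Int.natCast_dvd_natCast.1 h)
    omega
  have small : ∀ k : ℕ, 0 < k → k ≤ 3 → ¬ (l : ℤ) ∣ k * d := by
    intro k hk hk3 h
    have := Int.natCast_dvd_natCast.1 (hcop.dvd_of_dvd_mul_right h)
    have := Nat.le_of_dvd hk this
    interval_cases k <;> omega
  have s1 := small 1 (by norm_num) (by norm_num)
  have s2 := small 2 (by norm_num) (by norm_num)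
  have s3 := small 3 (by norm_num) (by norm_num)
  push_cast at s1 s2 s3
  -- `d' ≡ ±d` and `m ≡ ±d`, so one of `d' + m`, `d' - m` is `±2d`.
  have key : (l : ℤ) ∣ 2 * d ∨ (l : ℤ) ∣ 2 * d - d ∨ (l : ℤ) ∣ 2 * d + d := by
    have neg3 : ∀ w : ℤ, ((l : ℤ) ∣ w ∨ (l : ℤ) ∣ w - d ∨ (l : ℤ) ∣ w + d) →
        (l : ℤ) ∣ w - 2 * d ∨ (l : ℤ) ∣ w + 2 * d →
        (l : ℤ) ∣ 2 * d ∨ (l : ℤ) ∣ 2 * d - d ∨ (l : ℤ) ∣ 2 * d + d := by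
      rintro w (hw | hw | hw) (h | h)
      · exact .inl (by have := dvd_sub hw h; ring_nf at this ⊢; exact this)
      · exact .inl (by have := dvd_sub h hw; ring_nf at this ⊢; exact this)
      · exact .inr (.inl (by have := dvd_sub hw h; ring_nf at this ⊢; exact this))
      · exact .inr (.inr (by have := dvd_sub h hw; ring_nf at this ⊢; exact this))
      · exact .inr (.inr (by have := dvd_sub hw h; ring_nf at this ⊢; exact this))
      · exact .inr (.inl (by have := dvd_sub h hw; ring_nf at this ⊢; exact this))
    rcases h0.resolve_left nd' with h | h <;> rcases hm.resolve_left hm0 with h' | h'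
    · exact neg3 _ h1 (.inl (by have := dvd_add h h'; ring_nf at this ⊢; exact this))
    · exact neg3 _ h2 (.inl (by have := dvd_sub h h'; ring_nf at this ⊢; exact this))
    · exact neg3 _ h2 (.inr (by have := dvd_sub h h'; ring_nf at this ⊢; exact this))
    · exact neg3 _ h1 (.inr (by have := dvd_add h h'; ring_nf at this ⊢; exact this))
  rcases key with h | h | h
  · exact s2 h
  · exact s1 (by ring_nf at h ⊢; exact h)
  · exact s3 (by ring_nf at h ⊢; exact h)

/-- Section 4 setup: let i be the minimal index in {0, …, 2lh − 1}
with b_i ≠ 0. Then b_j = 0 for every index j distinct from i and from i + lh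
(modulo 2lh); consequently N'(x) = b_i·x^(p^i) + b_{i+lh}·x^(p^(i+lh)). -/
theorem bh_N_prime_two_terms (p h l d d' q : ℕ) (hp : p.Prime) (hpodd : Odd p)
    (hh : 0 < h) (hq : q = p ^ h) (hl : 2 < l)
    (hd1 : 1 ≤ d) (hd2 : d ≤ l - 1) (hgd : Nat.gcd l d = 1) (hod : Odd (l + d))
    (hd'1 : 1 ≤ d') (hd'2 : d' ≤ l - 1) (hgd' : Nat.gcd l d' = 1) (hod' : Odd (l + d'))
    (F : Type*) [Field F] [Fintype F] (hcard : Fintype.card F = q ^ (2 * l))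
    (β ω : F) (hβ : ∀ w : F, β ≠ w ^ 2) (hω : ω ≠ 0) (hωtr : ω + ω ^ q ^ l = 0)
    (ξ : F) (hξ0 : ξ ≠ 0) (hξ : ξ ^ (q ^ (l + d) - 1) = β ^ (1 - (q : ℤ) ^ l))
    (a b : F) (ha : a ^ q = a) (hb : b ^ q = b)
    (hns : ∀ w : F, w ^ q = w → a ^ 2 - b ^ 2 * ξ ^ (q ^ l + 1) ≠ w ^ 2)
    (L' N' : F → F) (hL'b : Function.Bijective L')
    (hL'a : ∀ x y : F, L' (x + y) = L' x + L' y)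
    (hN'b : Function.Bijective N') (hN'a : ∀ x y : F, N' (x + y) = N' x + N' y)
    (hiso : ∀ x y : F, L' (a * bhMul q l d β ω x y) +
        L' (b * bhMul q l d β ω (ξ * x ^ q ^ l) y) = bhMul q l d' β ω (N' x) (N' y))
    (bb aa : ℕ → F) (hbbper : ∀ i : ℕ, bb (i + 2 * l * h) = bb i)
    (haaper : ∀ i : ℕ, aa (i + 2 * l * h) = aa i)
    (hN'c : ∀ x : F, N' x = ∑ i ∈ Finset.range (2 * l * h), bb i * x ^ p ^ i)
    (hL'c : ∀ x : F, L' x = ∑ i ∈ Finset.range (2 * l * h), aa i * x ^ p ^ i)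
    (i : ℕ) (hi : i < 2 * l * h) (hbi : bb i ≠ 0) (himin : ∀ k : ℕ, k < i → bb k = 0) :
    (∀ j : ℕ, j < 2 * l * h → (j : ZMod (2 * l * h)) ≠ (i : ZMod (2 * l * h)) →
        (j : ZMod (2 * l * h)) ≠ ((i + l * h : ℕ) : ZMod (2 * l * h)) → bb j = 0) ∧
      ∀ x : F, N' x = bb i * x ^ p ^ i + bb (i + l * h) * x ^ p ^ (i + l * h) := by
  classical
  have : Fact p.Prime := ⟨hp⟩
  have hcard' : Fintype.card F = p ^ (2 * l * h) := by
    rw [hcard, hq, ← pow_mul]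
    congr 1
    ring
  have : CharP F p := charP_of_card_eq_prime_pow hcard'
  have hn0 : 0 < 2 * l * h := by positivity
  have : NeZero (2 * l * h) := ⟨hn0.ne'⟩
  set Φ := frobAct p (2 * l * h) hcard' with hΦ
  have hfr : ∀ (m : ℕ) (x : F), Φ.fr ((m * h : ℕ) : ZMod (2 * l * h)) x = x ^ q ^ m := by
    intro m x
    rw [hΦ, frobAct_fr, hq, ← pow_mul, mul_comm]
  set lam : ZMod (2 * l * h) := ((l * h : ℕ) : ZMod (2 * l * h)) with hlam
  set f : ZMod (2 * l * h) → F := fun k => bb k.val with hf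
  have hqo : Odd q := hq ▸ hpodd.pow
  have hp2 : p ≠ 2 := by rintro rfl; exact absurd hpodd (by decide)
  have two : (2 : F) ≠ 0 := Ring.two_ne_zero (by rwa [ringChar.eq F p])
  have hbh : ∀ (e : ℕ) (x y : F), Φ.bh lam ((e * h : ℕ) : ZMod (2 * l * h)) β ω x y =
      bhMul q l e β ω x y := by
    intro e x y
    simp only [FrobAction.bh, bhMul, hlam, hfr]
  have hlin : ∀ x, Φ.lin f x = N' x := fun x => by rw [hf, hΦ, frobAct_lin, hN'c]
  have hlinL : ∀ x, Φ.lin (fun k => aa k.val) x = L' x := fun x => by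
    rw [hΦ, frobAct_lin, hL'c]
  have hβ0 : β ≠ 0 := by simpa using hβ 0
  have hq0 : q ≠ 0 := by rintro rfl; exact absurd hqo (by decide)
  have cast0 : ∀ m : ℤ, ((m * h : ℤ) : ZMod (2 * l * h)) = 0 → (l : ℤ) ∣ m := fun m hm => by
    have := dvd_of_cast_eq (l := l) hh (m := m) (m' := 0) (by simpa using hm)
    simpa using this
  have nd : ¬ (l : ℤ) ∣ d := by
    intro h
    have := Nat.le_of_dvd (by omega) (Int.natCast_dvd_natCast.1 h)
    omega
  have S : Φ.Setup lam ((d * h : ℕ) : ZMod (2 * l * h)) ((d' * h : ℕ) : ZMod (2 * l * h))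
      β ω ξ a b f (fun k => aa k.val) :=
    { h2 := by
        rw [hlam, ← Nat.cast_add, ← two_mul, ← mul_assoc, ZMod.natCast_self]
      lam0 := by
        rw [hlam, Ne, ZMod.natCast_eq_zero_iff]
        intro hdvd
        have := Nat.le_of_dvd (by positivity) hdvd
        have : 0 < l * h := by positivity
        nlinarith
      del0 := by
        intro h0
        exact nd (cast0 d (by push_cast at h0 ⊢; exact h0))
      dellam := by
        intro h0
        have := dvd_of_cast_eq (l := l) hh (m := d) (m' := l) (by
          rw [hlam] at h0; push_cast at h0 ⊢; exact h0)
        exact nd ((dvd_sub_self_right).1 this)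
      two := two
      hβ := hβ0
      hω := hω
      hωtr := by rw [hlam, hfr]; linear_combination hωtr
      ha := by rw [hlam, hfr]; exact pow_iter_fixed ha l
      hb := by rw [hlam, hfr]; exact pow_iter_fixed hb l
      disc := by
        have := hns 0 (zero_pow hq0)
        rw [hlam, hfr, ← pow_succ']
        simpa using this
      iso := by
        intro x y
        rw [hlinL, hlin, hlin, hbh, hbh, hbh, hlam, hfr, hL'a]
        exact hiso x y }
  have castval : ∀ j, j < 2 * l * h → f (j : ZMod (2 * l * h)) = bb j := fun j hj => by
    simp only [hf, ZMod.val_natCast, Nat.mod_eq_of_lt hj]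
  have hfi : f (i : ZMod (2 * l * h)) ≠ 0 := by rwa [castval i hi]
  -- For `l = 3` the index `l` is odd and the discriminant would be a square in the fixed field.
  have hl3 : l ≠ 3 := by
    rintro rfl
    have hd : d = 2 := by
      have : d = 1 ∨ d = 2 := by omega
      rcases this with rfl | rfl
      · exact absurd hod (by decide)
      · rfl
    obtain ⟨z, hz1, hz2⟩ := (S.gram _ (Or.inl hfi)).2
    rw [hlam, hfr] at hz1 hz2
    have hN := norm_fixed hcard (Nat.pos_of_ne_zero hq0) hβ0 hξ
    rw [hd] at hN
    -- The norm of `ξ` is fixed by the `q^5`- and `q^6`-powers, hence by the `q`-power.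
    have hN6 : ((ξ * ξ ^ q ^ 3) ^ q ^ (3 + 2)) ^ q = ξ * ξ ^ q ^ 3 := by
      rw [← pow_mul, ← pow_succ]
      have := FiniteField.pow_card (ξ * ξ ^ q ^ 3)
      rwa [hcard] at this
    rw [hN] at hN6
    refine nonsquare_odd (q := q) (l := 3) (by decide) hqo
      (D := a ^ 2 - b ^ 2 * (ξ * ξ ^ q ^ 3)) ?_ ?_ hz1 hz2 two
    · have h1 := map_sub (iterateFrobenius F p h) (a ^ 2) (b ^ 2 * (ξ * ξ ^ q ^ 3))
      simp only [iterateFrobenius_def, ← hq] at h1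
      rw [h1, mul_pow (b ^ 2), hN6, pow_right_comm a, ha, pow_right_comm b, hb]
    · intro w hw
      have := hns w hw
      rwa [pow_succ' ξ] at this
  have main : ∀ j : ℕ, j < 2 * l * h → (j : ZMod (2 * l * h)) ≠ (i : ZMod (2 * l * h)) →
        (j : ZMod (2 * l * h)) ≠ ((i + l * h : ℕ) : ZMod (2 * l * h)) → bb j = 0 := by
    intro j hj hji hjil
    by_contra hbj
    have hfj : f (j : ZMod (2 * l * h)) ≠ 0 := by rwa [castval j hj]
    obtain ⟨m, hm, hm3⟩ := special_int (S.special _ _ (Or.inl hfj) (Or.inl hfi))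
    have tri : ∀ w : ℤ,
        FrobAction.Special lam ((d * h : ℕ) : ZMod (2 * l * h))
          ((w * h : ℤ) : ZMod (2 * l * h)) →
        (l : ℤ) ∣ w ∨ (l : ℤ) ∣ w - d ∨ (l : ℤ) ∣ w + d := by
      intro w hw
      obtain ⟨m', hm', h3⟩ := special_int hw
      have hd := dvd_of_cast_eq hh hm'
      rcases h3 with h3 | h3 | h3 <;> have h4 := dvd_add hd h3 <;> ring_nf at h4 ⊢ <;> tauto
    have t0 := S.special_tau _ _ (Or.inl hfi) (Or.inl hfi)
    have t1 := S.special_tau _ _ (Or.inl hfj) (Or.inl hfi)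
    have t2 := S.special_tau _ _ (Or.inl hfi) (Or.inl hfj)
    have hm' : (i : ZMod (2 * l * h)) - j = -((m * h : ℤ) : ZMod (2 * l * h)) := by
      rw [← hm]; ring
    rw [add_sub_assoc, sub_self, add_zero] at t0
    rw [add_sub_assoc, hm] at t1
    rw [add_sub_assoc, hm'] at t2
    have hlm := arith hl hl3 hgd hd'1 hd'2 hm3
      (tri d' (by convert t0 using 1; push_cast; ring))
      (tri (d' + m) (by convert t1 using 1; push_cast; ring))
      (tri (d' - m) (by convert t2 using 1; push_cast; ring))
    rcases cast_mul_of_dvd (h := h) hlm with h0 | h0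
    · rw [h0] at hm
      exact hji (sub_eq_zero.1 hm)
    · rw [h0] at hm
      exact hjil (by rw [Nat.cast_add, ← hm]; ring)
  refine ⟨main, fun x => ?_⟩
  have hfil : f ((i + l * h : ℕ) : ZMod (2 * l * h)) = bb (i + l * h) := by
    -- `i + lh` may exceed `2lh`, so `bb` is read modulo its period.
    have hper : ∀ c r, bb (r + c * (2 * l * h)) = bb r := by
      intro c r
      induction c with
      | zero => simp
      | succ c ih => rw [add_mul, one_mul, ← add_assoc, hbbper, ih]
    simp only [hf, ZMod.val_natCast]
    conv_rhs => rw [← Nat.mod_add_div (i + l * h) (2 * l * h), mul_comm (2 * l * h), hper]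
  have hne : (i : ZMod (2 * l * h)) ≠ ((i + l * h : ℕ) : ZMod (2 * l * h)) := by
    rw [Nat.cast_add]
    intro h0
    exact S.lam0 (left_eq_add.1 h0)
  rw [← hlin]
  change ∑ k, f k * Φ.fr k x = _
  rw [Finset.sum_eq_add _ _ hne, hfil, castval i hi, hΦ, frobAct_fr, frobAct_fr]
  · intro k _ hk
    have hk' : ((k.val : ℕ) : ZMod (2 * l * h)) = k := ZMod.natCast_zmod_val k
    have : f k = 0 := main k.val (ZMod.val_lt k) (by rw [hk']; exact hk.1) (by rw [hk']; exact hk.2)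
    rw [this, zero_mul]
  · simp
  · simp
end
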